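/- arXiv:2111.13306 — 4 statements merged into one kernel-verified Lean document; each statement's English description precedes it below -/
import Mathlib

section
/- Let (g,[·,·],[·,·]') be a compatible Lie algebra and (V,ρ,ρ') a representation of it. Let ∂ be the Chevalley–Eilenberg differential of the Lie algebra (g,[·,·]) with coefficients in (V,ρ), and ∂' the Chevalley–Eilenberg differential of (g,[·,·]') with coefficients in (V,ρ'). Then for every n ≥ 0 and every alternating n-linear map f: gⁿ → V, one has ∂(∂'f) + ∂'(∂f) = 0. -/
variable {K : Type*} [Field K] [CharZero K]
variable {g V : Type*} [AddCommGroup g] [Module K g] [AddCommGroup V] [Module K V]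

/-- The Chevalley–Eilenberg differential (defined on arbitrary `n`-cochains
`(Fin n → g) → V`), for a bracket `br` on `g` and an action `ρ : g → End V`:
`(∂f)(x₁,…,x_{n+1}) = Σᵢ (−1)^{i+1} ρ(xᵢ) f(x₁,…,x̂ᵢ,…,x_{n+1})
  + Σ_{i<j} (−1)^{i+j} f([xᵢ,xⱼ], x₁,…,x̂ᵢ,…,x̂ⱼ,…,x_{n+1})`,
and for `n = 0`, `(∂v)(x) = ρ(x) v`. -/
def ceDiff (br : g → g → g) (ρ : g → Module.End K V) :
    (n : ℕ) → ((Fin n → g) → V) → ((Fin (n + 1) → g) → V)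
  | 0, f => fun x => ρ (x 0) (f Fin.elim0)
  | n + 1, f => fun x =>
      (∑ i : Fin (n + 2), ((-1 : ℤ) ^ (i : ℕ)) • ρ (x i) (f (x ∘ i.succAbove))) +
      ∑ i : Fin (n + 2), ∑ j : Fin (n + 2),
        if h : (i : ℕ) < (j : ℕ) then
          ((-1 : ℤ) ^ ((i : ℕ) + (j : ℕ))) •
            f (Fin.cons (br (x i) (x j)) (fun k : Fin n =>
              x (j.succAbove ((Fin.castLT i
                (lt_of_lt_of_le h (Nat.lt_succ_iff.mp j.isLt))).succAbove k))))
        else 0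

/-- Contraction of a cochain in the first slot. -/
def ceIota {g V : Type*} {n : ℕ} (y : g) (f : (Fin (n + 1) → g) → V) : (Fin n → g) → V :=
  fun x => f (Fin.cons y x)

theorem ceIota_ext {g V : Type*} {n : ℕ} {f h : (Fin (n + 1) → g) → V}
    (H : ∀ y, ceIota y f = ceIota y h) : f = h := by
  funext x
  have := congrFun (H (x 0)) (Fin.tail x)
  simpa [ceIota] using this

theorem ceIota_add {g V : Type*} [AddCommGroup V] {n : ℕ} (y : g)
    (f h : (Fin (n + 1) → g) → V) : ceIota y (f + h) = ceIota y f + ceIota y h := rfl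

theorem ceIota_sub {g V : Type*} [AddCommGroup V] {n : ℕ} (y : g)
    (f h : (Fin (n + 1) → g) → V) : ceIota y (f - h) = ceIota y f - ceIota y h := rfl

theorem ceIota_neg {g V : Type*} [AddCommGroup V] {n : ℕ} (y : g)
    (f : (Fin (n + 1) → g) → V) : ceIota y (-f) = -ceIota y f := rfl

theorem ceIota_zero {g V : Type*} [AddCommGroup V] {n : ℕ} (y : g) :
    ceIota y (0 : (Fin (n + 1) → g) → V) = 0 := rfl

/-- Additivity in every slot, recursively. -/
def CeAdd {g V : Type*} [AddCommGroup g] [AddCommGroup V] : (n : ℕ) → ((Fin n → g) → V) → Prop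
  | 0, _ => True
  | n + 1, f => (∀ y, CeAdd n (ceIota y f)) ∧
      ∀ y z, ceIota (y + z) f = ceIota y f + ceIota z f

/-- Skew-symmetry under adjacent transpositions, recursively. -/
def CeSkew {g V : Type*} [AddCommGroup V] : (n : ℕ) → ((Fin n → g) → V) → Prop
  | 0, _ => True
  | 1, _ => True
  | n + 2, f => (∀ y, CeSkew (n + 1) (ceIota y f)) ∧
      ∀ y z, ceIota z (ceIota y f) = - ceIota y (ceIota z f)

/-- Lie derivative, recursively. -/
def ceLie (B : g →ₗ[K] g →ₗ[K] g) (ρ : g →ₗ[K] Module.End K V) (y : g) :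
    (n : ℕ) → ((Fin n → g) → V) → ((Fin n → g) → V)
  | 0, f => fun x => ρ y (f x)
  | n + 1, f => fun x =>
      ceLie B ρ y n (ceIota (x 0) f) (Fin.tail x) - ceIota (B y (x 0)) f (Fin.tail x)

/-- The differential, defined by Cartan's formula. -/
def ceD (B : g →ₗ[K] g →ₗ[K] g) (ρ : g →ₗ[K] Module.End K V) :
    (n : ℕ) → ((Fin n → g) → V) → ((Fin (n + 1) → g) → V)
  | 0, f => fun x => ceLie B ρ (x 0) 0 f (Fin.tail x)
  | n + 1, f => fun x =>
      ceLie B ρ (x 0) (n + 1) f (Fin.tail x) - ceD B ρ n (ceIota (x 0) f) (Fin.tail x)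

theorem CeAdd.neg {g V : Type*} [AddCommGroup g] [AddCommGroup V] {n : ℕ}
    {f : (Fin (n + 1) → g) → V} (hf : CeAdd (n + 1) f) (y : g) :
    ceIota (-y) f = - ceIota y f := by
  have h0 := hf.2 0 0
  have h1 := hf.2 (-y) y
  simp only [add_zero, neg_add_cancel] at h0 h1
  have h0' : ceIota 0 f = 0 := by simpa using h0
  rw [h0'] at h1
  exact eq_neg_of_add_eq_zero_left h1.symm

theorem CeAdd.sub {g V : Type*} [AddCommGroup g] [AddCommGroup V] {n : ℕ}
    {f : (Fin (n + 1) → g) → V} (hf : CeAdd (n + 1) f) (y z : g) :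
    ceIota (y - z) f = ceIota y f - ceIota z f := by
  rw [sub_eq_add_neg, hf.2, hf.neg, sub_eq_add_neg]

section ops
variable (B B' : g →ₗ[K] g →ₗ[K] g) (ρ ρ' : g →ₗ[K] Module.End K V)

theorem ceIota_ceLie (y z : g) (n : ℕ) (f : (Fin (n + 1) → g) → V) :
    ceIota z (ceLie B ρ y (n + 1) f) = ceLie B ρ y n (ceIota z f) - ceIota (B y z) f := by
  funext x
  simp [ceIota, ceLie]

theorem ceIota_ceD_zero (y : g) (f : (Fin 0 → g) → V) :
    ceIota y (ceD B ρ 0 f) = ceLie B ρ y 0 f := by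
  funext x
  simp [ceIota, ceD]

theorem ceIota_ceD (y : g) (n : ℕ) (f : (Fin (n + 1) → g) → V) :
    ceIota y (ceD B ρ (n + 1) f) = ceLie B ρ y (n + 1) f - ceD B ρ n (ceIota y f) := by
  funext x
  simp [ceIota, ceD]

theorem ceLie_add (y : g) (n : ℕ) (f h : (Fin n → g) → V) :
    ceLie B ρ y n (f + h) = ceLie B ρ y n f + ceLie B ρ y n h := by
  induction n with
  | zero => funext x; simp [ceLie]
  | succ n ih =>
    refine ceIota_ext fun z => ?_
    simp only [ceIota_ceLie, ceIota_add, ih]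
    abel

theorem ceLie_zero (y : g) (n : ℕ) : ceLie B ρ y n (0 : (Fin n → g) → V) = 0 := by
  simpa using ceLie_add B ρ y n 0 0

theorem ceLie_neg (y : g) (n : ℕ) (f : (Fin n → g) → V) :
    ceLie B ρ y n (-f) = -ceLie B ρ y n f := by
  have := ceLie_add B ρ y n (-f) f
  rw [neg_add_cancel, ceLie_zero] at this
  exact eq_neg_of_add_eq_zero_left this.symm

theorem ceLie_sub (y : g) (n : ℕ) (f h : (Fin n → g) → V) :
    ceLie B ρ y n (f - h) = ceLie B ρ y n f - ceLie B ρ y n h := by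
  rw [sub_eq_add_neg, ceLie_add, ceLie_neg, sub_eq_add_neg]

theorem ceD_add (n : ℕ) (f h : (Fin n → g) → V) :
    ceD B ρ n (f + h) = ceD B ρ n f + ceD B ρ n h := by
  induction n with
  | zero =>
    refine ceIota_ext fun z => ?_
    simp only [ceIota_ceD_zero, ceIota_add, ceLie_add]
  | succ n ih =>
    refine ceIota_ext fun z => ?_
    simp only [ceIota_ceD, ceIota_add, ih, ceLie_add]
    abel

theorem ceD_zero (n : ℕ) : ceD B ρ n (0 : (Fin n → g) → V) = 0 := by
  simpa using ceD_add B ρ n 0 0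

theorem ceD_neg (n : ℕ) (f : (Fin n → g) → V) :
    ceD B ρ n (-f) = -ceD B ρ n f := by
  have := ceD_add B ρ n (-f) f
  rw [neg_add_cancel, ceD_zero] at this
  exact eq_neg_of_add_eq_zero_left this.symm

theorem ceD_sub (n : ℕ) (f h : (Fin n → g) → V) :
    ceD B ρ n (f - h) = ceD B ρ n f - ceD B ρ n h := by
  rw [sub_eq_add_neg, ceD_add, ceD_neg, sub_eq_add_neg]

theorem ceLie_skew (y : g) (n : ℕ) (f : (Fin n → g) → V) (hs : CeSkew n f) :
    CeSkew n (ceLie B ρ y n f) := by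
  have aux : ∀ (n : ℕ) (f h : (Fin n → g) → V), CeSkew n f → CeSkew n h → CeSkew n (f - h) := by
    intro n
    induction n with
    | zero => intros; trivial
    | succ n ih =>
      rcases n with _ | n
      · intros; trivial
      · intro f h hf hh
        refine ⟨fun y => ih _ _ (hf.1 y) (hh.1 y), fun y z => ?_⟩
        simp only [ceIota_sub, hf.2 y z, hh.2 y z]
        abel
  induction n with
  | zero => trivial
  | succ n ih =>
    rcases n with _ | n
    · trivial
    · refine ⟨fun z => ?_, fun z w => ?_⟩
      · rw [ceIota_ceLie]
        exact aux _ _ _ (ih _ (hs.1 z)) (hs.1 _)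
      · simp only [ceIota_ceLie, ceIota_sub]
        rw [hs.2 z w, hs.2 z (B y w), hs.2 (B y z) w, ceLie_neg]
        abel

theorem ceSkew_sub (n : ℕ) (f h : (Fin n → g) → V) (hf : CeSkew n f) (hh : CeSkew n h) :
    CeSkew n (f - h) := by
  induction n with
  | zero => trivial
  | succ n ih =>
    rcases n with _ | n
    · trivial
    · refine ⟨fun y => ih _ _ (hf.1 y) (hh.1 y), fun y z => ?_⟩
      simp only [ceIota_sub, hf.2 y z, hh.2 y z]
      abel

theorem ceD_skew (hB : ∀ x y, B x y = - B y x) (n : ℕ) (f : (Fin n → g) → V)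
    (ha : CeAdd n f) (hs : CeSkew n f) : CeSkew (n + 1) (ceD B ρ n f) := by
  induction n with
  | zero => trivial
  | succ n ih =>
    refine ⟨fun z => ?_, fun y z => ?_⟩
    · rw [ceIota_ceD]
      refine ceSkew_sub _ _ _ (ceLie_skew B ρ _ _ _ hs) (ih _ (ha.1 z) ?_)
      rcases n with _ | n
      · trivial
      · exact hs.1 z
    · simp only [ceIota_ceD, ceIota_sub, ceIota_ceLie]
      rw [hB z y, ha.neg]
      rcases n with _ | n
      · simp only [ceIota_ceD_zero]
        abel
      · simp only [ceIota_ceD]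
        rw [hs.2 y z, ceD_neg]
        abel

end ops

section main
variable {B B' : g →ₗ[K] g →ₗ[K] g} {ρ ρ' : g →ₗ[K] Module.End K V}

theorem ceLie_comm (hB : ∀ x y, B x y = - B y x) (hB' : ∀ x y, B' x y = - B' y x)
    (hcompat : ∀ x y z : g, B (B' x y) z + B' (B x y) z
      = B (B' x z) y + B' (B x z) y + B x (B' y z) + B' x (B y z))
    (hmix : ∀ x y : g, ρ (B' x y) + ρ' (B x y)
      = ρ x * ρ' y - ρ' y * ρ x + ρ' x * ρ y - ρ y * ρ' x)
    (y z : g) (n : ℕ) (f : (Fin n → g) → V) (ha : CeAdd n f) :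
    ceLie B' ρ' (B y z) n f = ceLie B ρ y n (ceLie B' ρ' z n f)
      - ceLie B' ρ' z n (ceLie B ρ y n f) + ceLie B' ρ' y n (ceLie B ρ z n f)
      - ceLie B ρ z n (ceLie B' ρ' y n f) - ceLie B ρ (B' y z) n f := by
  induction n with
  | zero =>
    funext x
    have := congrArg (fun T => T (f x)) (hmix y z)
    simp only [LinearMap.add_apply, LinearMap.sub_apply, Module.End.mul_apply] at this
    simp only [ceLie, Pi.add_apply, Pi.sub_apply]
    rw [← this]
    abel
  | succ n ih =>
    refine ceIota_ext fun w => ?_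
    simp only [ceIota_ceLie, ceIota_sub, ceIota_add, ceLie_sub]
    rw [ih _ (ha.1 w)]
    have e : B' (B y z) w = -B z (B' y w) - B' z (B y w) + B y (B' z w) + B' y (B z w)
        - B (B' y z) w := by
      rw [eq_sub_iff_add_eq, add_comm, hcompat, hB _ z, hB' _ z]
      abel
    rw [e]
    simp only [ha.sub, ha.2, ha.neg]
    abel

theorem ceLie_ceD (hB : ∀ x y, B x y = - B y x) (hB' : ∀ x y, B' x y = - B' y x)
    (hcompat : ∀ x y z : g, B (B' x y) z + B' (B x y) z
      = B (B' x z) y + B' (B x z) y + B x (B' y z) + B' x (B y z))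
    (hmix : ∀ x y : g, ρ (B' x y) + ρ' (B x y)
      = ρ x * ρ' y - ρ' y * ρ x + ρ' x * ρ y - ρ y * ρ' x)
    (y : g) (n : ℕ) (f : (Fin n → g) → V) (ha : CeAdd n f) :
    ceLie B ρ y (n + 1) (ceD B' ρ' n f) = ceD B' ρ' n (ceLie B ρ y n f)
      - ceLie B' ρ' y (n + 1) (ceD B ρ n f) + ceD B ρ n (ceLie B' ρ' y n f) := by
  induction n with
  | zero =>
    refine ceIota_ext fun z => ?_
    simp only [ceIota_ceLie, ceIota_sub, ceIota_add, ceIota_ceD_zero]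
    rw [ceLie_comm hB hB' hcompat hmix y z 0 f ha]
    abel
  | succ n ih =>
    refine ceIota_ext fun z => ?_
    simp only [ceIota_ceLie, ceIota_sub, ceIota_add, ceIota_ceD, ceLie_sub, ceD_sub]
    rw [ceLie_comm hB hB' hcompat hmix y z _ f ha, ih _ (ha.1 z)]
    abel

theorem ceD_anticomm (hB : ∀ x y, B x y = - B y x) (hB' : ∀ x y, B' x y = - B' y x)
    (hcompat : ∀ x y z : g, B (B' x y) z + B' (B x y) z
      = B (B' x z) y + B' (B x z) y + B x (B' y z) + B' x (B y z))
    (hmix : ∀ x y : g, ρ (B' x y) + ρ' (B x y)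
      = ρ x * ρ' y - ρ' y * ρ x + ρ' x * ρ y - ρ y * ρ' x)
    (n : ℕ) (f : (Fin n → g) → V) (ha : CeAdd n f) :
    ceD B ρ (n + 1) (ceD B' ρ' n f) = - ceD B' ρ' (n + 1) (ceD B ρ n f) := by
  induction n with
  | zero =>
    refine ceIota_ext fun z => ?_
    simp only [ceIota_neg, ceIota_ceD, ceIota_ceD_zero]
    rw [ceLie_ceD hB hB' hcompat hmix z 0 f ha]
    abel
  | succ n ih =>
    refine ceIota_ext fun z => ?_
    simp only [ceIota_neg, ceIota_ceD, ceD_sub]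
    rw [ceLie_ceD hB hB' hcompat hmix z _ f ha, ih _ (ha.1 z)]
    abel

/-- The Lie derivative of a skew cochain by the signed-sum formula. -/
theorem ceLie_eq_sum (y : g) (n : ℕ) (f : (Fin (n + 1) → g) → V) (hs : CeSkew (n + 1) f)
    (x : Fin (n + 1) → g) :
    ceLie B ρ y (n + 1) f x = ρ y (f x) -
      ∑ j : Fin (n + 1), ((-1 : ℤ) ^ (j : ℕ)) • f (Fin.cons (B y (x j)) (x ∘ j.succAbove)) := by
  induction n with
  | zero =>
    simp [ceLie, ceIota]
    congr 2
    all_goals first | rfl | (funext i; exact i.elim0)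
  | succ n ih =>
    rw [ceLie]
    beta_reduce
    rw [ih _ (hs.1 (x 0)), Fin.sum_univ_succ (n := n + 1)]
    have h1 : ceIota (x 0) f (Fin.tail x) = f x := by simp [ceIota]
    have h2 : ∀ j : Fin (n + 1), f (Fin.cons (B y (x j.succ)) (x ∘ j.succ.succAbove))
        = - ceIota (x 0) f (Fin.cons (B y (Fin.tail x j)) (Fin.tail x ∘ j.succAbove)) := by
      intro j
      have := congrFun (hs.2 (B y (x j.succ)) (x 0)) (Fin.tail x ∘ j.succAbove)
      simp only [ceIota, Pi.neg_apply] at this ⊢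
      rw [Fin.tail, ← this]
      congr 2
      funext k
      refine Fin.cases ?_ (fun k => ?_) k <;> simp [Fin.tail]
    have h3 : x ∘ (0 : Fin (n + 2)).succAbove = Fin.tail x := by
      funext k; simp [Fin.tail]
    simp only [h1, h2, h3, Fin.val_succ, pow_succ, Fin.val_zero, pow_zero, one_smul, mul_neg,
      mul_one, neg_smul, smul_neg, neg_neg]
    simp only [ceIota]
    abel

theorem ceIota_ceDiff (y : g) (n : ℕ) (f : (Fin (n + 1) → g) → V) (hs : CeSkew (n + 1) f) :
    ceIota y (ceDiff (fun u v => B u v) (fun u => ρ u) (n + 1) f) = ceLie B ρ y (n + 1) f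
      - ceDiff (fun u v => B u v) (fun u => ρ u) n (ceIota y f) := by
  funext x
  rw [Pi.sub_apply, ceLie_eq_sum y n f hs x]
  have c0 : (Fin.cons y x : Fin (n + 2) → g) ∘ (0 : Fin (n + 2)).succAbove = x := by
    funext k; simp
  have c1 : ∀ j : Fin (n + 1), (fun k : Fin n =>
      (Fin.cons y x : Fin (n + 2) → g) (j.succ.succAbove ((0 : Fin (n + 1)).succAbove k)))
      = x ∘ j.succAbove := by
    intro j; funext k; simp
  rcases n with _ | n
  · simp [ceIota, ceDiff, Fin.sum_univ_succ]
    have e1 : Fin.tail x = Fin.elim0 := by funext i; exact i.elim0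
    have e2 : (fun k : Fin 0 => x k.succ) = x ∘ Fin.succ := rfl
    rw [e1, e2]
    abel
  · have c2 : ∀ i : Fin (n + 2), (Fin.cons y x : Fin (n + 3) → g) ∘ i.succ.succAbove
        = Fin.cons y (x ∘ i.succAbove) := by
      intro i; funext k
      refine Fin.cases ?_ (fun k => ?_) k <;> simp
    have c3 : ∀ (i j : Fin (n + 2)) (h : (i : ℕ) < j) (h' : (i.succ : ℕ) < n + 2),
        f (Fin.cons (B (x i) (x j)) (fun k : Fin (n + 1) =>
          (Fin.cons y x : Fin (n + 3) → g)
            (j.succ.succAbove ((Fin.castLT i.succ h').succAbove k))))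
        = - f (Fin.cons y (Fin.cons (B (x i) (x j)) (fun k : Fin n =>
              x (j.succAbove ((Fin.castLT i
                (lt_of_lt_of_le h (Nat.lt_succ_iff.mp j.isLt))).succAbove k))))) := by
      intro i j h h'
      have := congrFun (hs.2 (B (x i) (x j)) y) (fun k : Fin n =>
              x (j.succAbove ((Fin.castLT i
                (lt_of_lt_of_le h (Nat.lt_succ_iff.mp j.isLt))).succAbove k)))
      simp only [ceIota, Pi.neg_apply] at this
      rw [← this]
      congr 2
      have e : Fin.castLT i.succ h' = (Fin.castLT i
                (lt_of_lt_of_le h (Nat.lt_succ_iff.mp j.isLt))).succ := rfl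
      rw [e]
      funext k
      refine Fin.cases ?_ (fun k => ?_) k <;> simp
    have s1 : ∀ j : Fin (n + 2), (if h : ((0 : Fin (n + 3)) : ℕ) < (j.succ : ℕ) then
          ((-1 : ℤ) ^ (((0 : Fin (n + 3)) : ℕ) + (j.succ : ℕ))) •
            f (Fin.cons (B y (x j)) (fun k : Fin (n + 1) =>
              (Fin.cons y x : Fin (n + 3) → g) (j.succ.succAbove ((Fin.castLT 0
                (lt_of_lt_of_le h (Nat.lt_succ_iff.mp j.succ.isLt))).succAbove k))))
        else 0) = - (((-1 : ℤ) ^ (j : ℕ)) • f (Fin.cons (B y (x j)) (x ∘ j.succAbove))) := by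
      intro j
      rw [dif_pos (by simp), ← c1 j]
      simp only [Fin.val_zero, Fin.val_succ, zero_add, pow_succ, mul_neg, mul_one, neg_smul]
      rfl
    have s2 : ∀ i j : Fin (n + 2), (if h : (i.succ : ℕ) < (j.succ : ℕ) then
          ((-1 : ℤ) ^ ((i.succ : ℕ) + (j.succ : ℕ))) •
            f (Fin.cons (B (x i) (x j)) (fun k : Fin (n + 1) =>
              (Fin.cons y x : Fin (n + 3) → g) (j.succ.succAbove ((Fin.castLT i.succ
                (lt_of_lt_of_le h (Nat.lt_succ_iff.mp j.succ.isLt))).succAbove k))))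
        else 0) = - (if h : (i : ℕ) < (j : ℕ) then
          ((-1 : ℤ) ^ ((i : ℕ) + (j : ℕ))) •
            f (Fin.cons y (Fin.cons (B (x i) (x j)) (fun k : Fin n =>
              x (j.succAbove ((Fin.castLT i
                (lt_of_lt_of_le h (Nat.lt_succ_iff.mp j.isLt))).succAbove k)))))
        else 0) := by
      intro i j
      by_cases h : (i : ℕ) < j
      · have h2 : (i.succ : ℕ) < (j.succ : ℕ) := by simpa using h
        rw [dif_pos h, dif_pos h2, c3 i j h, smul_neg]
        congr 2
        simp only [Fin.val_succ]
        ring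
      · have h2 : ¬ (i.succ : ℕ) < (j.succ : ℕ) := by simpa using h
        rw [dif_neg h, dif_neg h2, neg_zero]
    have z1 : ∀ i : Fin (n + 3), ¬ ((i : ℕ) < ((0 : Fin (n + 3)) : ℕ)) := by intro i; simp
    simp only [ceIota, ceDiff]
    rw [Fin.sum_univ_succ, Fin.sum_univ_succ (n := n + 2)
      (f := fun i : Fin (n + 3) => ∑ j : Fin (n + 3), _)]
    simp only [Fin.sum_univ_succ (n := n + 2), Fin.cons_zero, Fin.cons_succ, c0, c2]
    simp only [↓s1, ↓s2, ↓dif_neg (z1 _)]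
    simp only [Finset.sum_neg_distrib, zero_add, Fin.val_succ, pow_succ, Fin.val_zero,
      pow_zero, one_smul, mul_neg, mul_one, neg_smul]
    abel

theorem ceDiff_eq_ceD (n : ℕ) (f : (Fin n → g) → V) (hs : CeSkew n f) :
    ceDiff (fun u v => B u v) (fun u => ρ u) n f = ceD B ρ n f := by
  induction n with
  | zero =>
    funext x
    simp only [ceDiff, ceD, ceLie]
    congr 2
    funext i; exact i.elim0
  | succ n ih =>
    refine ceIota_ext fun y => ?_
    rw [ceIota_ceDiff y n f hs, ceIota_ceD, ih]
    rcases n with _ | n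
    · trivial
    · exact hs.1 y

theorem AlternatingMap.ceAdd (n : ℕ) (f : AlternatingMap K g V (Fin n)) : CeAdd n ⇑f := by
  induction n with
  | zero => trivial
  | succ n ih =>
    refine ⟨fun y => ih (f.curryLeft y), fun y z => ?_⟩
    have := map_add f.curryLeft y z
    funext x
    exact congrArg (fun h : AlternatingMap K g V (Fin n) => h x) this

theorem AlternatingMap.ceSkew (n : ℕ) (f : AlternatingMap K g V (Fin n)) : CeSkew n ⇑f := by
  induction n with
  | zero => trivial
  | succ n ih =>
    rcases n with _ | n
    · trivial
    · refine ⟨fun y => ih (f.curryLeft y), fun y z => ?_⟩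
      funext x
      have h01 : (0 : Fin (n + 2)) ≠ 1 := by simp
      have := f.map_swap (Fin.cons z (Fin.cons y x)) h01
      simp only [ceIota, Pi.neg_apply]
      rw [← this]
      congr 1
      funext k
      refine Fin.cases ?_ (fun k => Fin.cases ?_ (fun k => ?_) k) k
      · simp
      · simp
      · simp [Equiv.swap_apply_def, Fin.ext_iff]

end main

/-- For a compatible Lie algebra `(g,B,B')` with representation `(V,ρ,ρ')`, the
two Chevalley–Eilenberg differentials anticommute: `∂(∂'f) + ∂'(∂f) = 0` for every
alternating `n`-linear map `f : gⁿ → V`, `n ≥ 0`. -/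
theorem stmt_2
    (B B' : g →ₗ[K] g →ₗ[K] g) (ρ ρ' : g →ₗ[K] Module.End K V)
    (hBskew : ∀ x y : g, B x y = - B y x)
    (hB'skew : ∀ x y : g, B' x y = - B' y x)
    (hBjac : ∀ x y z : g, B (B x y) z + B (B y z) x + B (B z x) y = 0)
    (hB'jac : ∀ x y z : g, B' (B' x y) z + B' (B' y z) x + B' (B' z x) y = 0)
    (hcompat : ∀ x y z : g, B (B' x y) z + B' (B x y) z
      = B (B' x z) y + B' (B x z) y + B x (B' y z) + B' x (B y z))
    (hρ : ∀ x y : g, ρ (B x y) = ρ x * ρ y - ρ y * ρ x)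
    (hρ' : ∀ x y : g, ρ' (B' x y) = ρ' x * ρ' y - ρ' y * ρ' x)
    (hmix : ∀ x y : g, ρ (B' x y) + ρ' (B x y)
      = ρ x * ρ' y - ρ' y * ρ x + ρ' x * ρ y - ρ y * ρ' x)
    (n : ℕ) (f : AlternatingMap K g V (Fin n)) (x : Fin (n + 2) → g) :
    ceDiff (fun u v => B u v) (fun u => ρ u) (n + 1)
        (ceDiff (fun u v => B' u v) (fun u => ρ' u) n ⇑f) x
      + ceDiff (fun u v => B' u v) (fun u => ρ' u) (n + 1)
        (ceDiff (fun u v => B u v) (fun u => ρ u) n ⇑f) x = 0 := by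
  have ha := AlternatingMap.ceAdd n f
  have hs := AlternatingMap.ceSkew n f
  rw [ceDiff_eq_ceD n _ hs, ceDiff_eq_ceD n _ hs,
    ceDiff_eq_ceD (n + 1) _ (ceD_skew B' ρ' hB'skew n _ ha hs),
    ceDiff_eq_ceD (n + 1) _ (ceD_skew B ρ hBskew n _ ha hs),
    ceD_anticomm hBskew hB'skew hcompat hmix n _ ha]
  simp
end

section
/- Let (g,[·,·],[·,·]') be a compatible Lie algebra and (V,ρ,ρ') a representation of it, with Chevalley–Eilenberg differentials ∂ (for [·,·], ρ) and ∂' (for [·,·]', ρ'). For n ≥ 1 define C^n_c(g,V) as the direct sum of n copies of the space of alternating n-linear maps gⁿ → V, and define ∂_c: C^n_c(g,V) → C^{n+1}_c(g,V) by ∂_c(f₁,…,fₙ) = (∂f₁, ∂f₂ + ∂'f₁, …, ∂fᵢ + ∂'f_{i−1}, …, ∂'fₙ). Then ∂_c ∘ ∂_c = 0 as a map C^n_c(g,V) → C^{n+2}_c(g,V) for every n ≥ 1. -/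
variable {K : Type*} [Field K] [CharZero K]
variable {g V : Type*} [AddCommGroup g] [Module K g] [AddCommGroup V] [Module K V]

/-- The differential of the compatible cochain complex:
`∂_c(f₁,…,fₙ) = (∂f₁, ∂f₂ + ∂'f₁, …, ∂fᵢ + ∂'f_{i−1}, …, ∂'fₙ)`. -/
def compDiff (br br' : g → g → g) (ρ ρ' : g → Module.End K V) (n : ℕ)
    (F : Fin n → ((Fin n → g) → V)) : Fin (n + 1) → ((Fin (n + 1) → g) → V) :=
  fun i =>
    (if h : (i : ℕ) < n then ceDiff br ρ n (F ⟨(i : ℕ), h⟩) else 0) +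
    (if h : 0 < (i : ℕ) then
        ceDiff br' ρ' n (F ⟨(i : ℕ) - 1, by have := i.isLt; omega⟩) else 0)


namespace CE

theorem coe_add' {n : ℕ} (f h : AlternatingMap K g V (Fin n)) : ⇑(f + h) = ⇑f + ⇑h := rfl

theorem coe_smul' {n : ℕ} (c : K) (f : AlternatingMap K g V (Fin n)) : ⇑(c • f) = c • ⇑f := rfl

theorem coe_zero' {n : ℕ} : ⇑(0 : AlternatingMap K g V (Fin n)) = 0 := rfl

theorem curry_sub {n : ℕ} (f h : AlternatingMap K g V (Fin (n + 1))) (x : g) :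
    (f - h).curryLeft x = f.curryLeft x - h.curryLeft x := by
  ext v
  simp

theorem curry_ext {n : ℕ} {f h : AlternatingMap K g V (Fin (n + 1))}
    (H : ∀ x, f.curryLeft x = h.curryLeft x) : f = h := by
  ext v
  have := congrArg (fun a => a (Fin.tail v)) (H (v 0))
  simpa [Matrix.vecCons] using this

/-- Extension of a linear endomorphism of `g` to alternating maps as a derivation. -/
def der (T : g →ₗ[K] g) {n : ℕ} (f : AlternatingMap K g V (Fin n)) :
    AlternatingMap K g V (Fin n) :=
  { (∑ k : Fin n, f.toMultilinearMap.compLinearMap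
      (fun j => if j = k then T else LinearMap.id)) with
    map_eq_zero_of_eq' := by
      intro v i j hij hne
      have key : ∀ k : Fin n, (fun l => (if l = k then T else LinearMap.id : g →ₗ[K] g) (v l))
          = Function.update v k (T (v k)) := by
        intro k
        funext l
        by_cases h : l = k
        · subst h; simp
        · simp [h]
      simp only [MultilinearMap.toFun_eq_coe, _root_.sum_apply,
        MultilinearMap.compLinearMap_apply, key, AlternatingMap.coe_multilinearMap]
      rw [Finset.sum_eq_add_of_mem i j (Finset.mem_univ _) (Finset.mem_univ _) hne]
      · have : Function.update v j (T (v j)) =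
            Function.update v i (T (v i)) ∘ Equiv.swap i j := by
          funext l
          by_cases h1 : l = i
          · subst h1; simp [Function.update_of_ne hne, Function.update_of_ne hne.symm, hij]
          · by_cases h2 : l = j
            · subst h2; simp [hij]
            · simp [h1, h2, Equiv.swap_apply_of_ne_of_ne h1 h2]
        rw [this, f.map_swap _ hne]
        simp
      · intro k _ hk
        apply f.map_eq_zero_of_eq _ _ hne
        rw [Function.update_of_ne hk.1.symm, Function.update_of_ne hk.2.symm, hij] }

theorem der_apply (T : g →ₗ[K] g) {n : ℕ} (f : AlternatingMap K g V (Fin n)) (v : Fin n → g) :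
    der T f v = ∑ k, f (Function.update v k (T (v k))) := by
  have key : ∀ k : Fin n, (fun l => (if l = k then T else LinearMap.id : g →ₗ[K] g) (v l))
      = Function.update v k (T (v k)) := by
    intro k
    funext l
    by_cases h : l = k
    · subst h; simp
    · simp [h]
  change (∑ k : Fin n, f.toMultilinearMap.compLinearMap
      (fun j => if j = k then T else LinearMap.id)) v = _
  simp only [_root_.sum_apply,
        MultilinearMap.compLinearMap_apply, key, AlternatingMap.coe_multilinearMap]

theorem curry_der (T : g →ₗ[K] g) {n : ℕ} (f : AlternatingMap K g V (Fin (n + 1))) (y : g) :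
    (der T f).curryLeft y = der T (f.curryLeft y) + f.curryLeft (T y) := by
  ext v
  simp only [AlternatingMap.curryLeft_apply_apply, AlternatingMap.add_apply, der_apply,
    Fin.sum_univ_succ, Matrix.vecCons]
  simp only [Fin.cons_zero, Fin.cons_succ, Fin.update_cons_zero, ← Fin.cons_update]
  rw [add_comm]

/-- Lie derivative. -/
def lie (B : g →ₗ[K] g →ₗ[K] g) (ρ : g →ₗ[K] Module.End K V) (x : g) {n : ℕ}
    (f : AlternatingMap K g V (Fin n)) : AlternatingMap K g V (Fin n) :=
  (ρ x).compAlternatingMap f - der (B x) f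

theorem lie_apply (B : g →ₗ[K] g →ₗ[K] g) (ρ : g →ₗ[K] Module.End K V) (x : g) {n : ℕ}
    (f : AlternatingMap K g V (Fin n)) (v : Fin n → g) :
    lie B ρ x f v = ρ x (f v) - ∑ k, f (Function.update v k (B x (v k))) := by
  simp [lie, der_apply]

theorem curry_lie (B : g →ₗ[K] g →ₗ[K] g) (ρ : g →ₗ[K] Module.End K V) (x : g) {n : ℕ}
    (f : AlternatingMap K g V (Fin (n + 1))) (y : g) :
    (lie B ρ x f).curryLeft y = lie B ρ x (f.curryLeft y) - f.curryLeft (B x y) := by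
  have h := curry_der (B x) f y
  ext v
  have h' := congrArg (fun a => a v) h
  simp only [lie, AlternatingMap.curryLeft_apply_apply, AlternatingMap.add_apply,
    AlternatingMap.sub_apply, LinearMap.compAlternatingMap_apply] at h' ⊢
  rw [h']; abel

theorem lie_sub (B : g →ₗ[K] g →ₗ[K] g) (ρ : g →ₗ[K] Module.End K V) (x : g) {n : ℕ}
    (f h : AlternatingMap K g V (Fin n)) :
    lie B ρ x (f - h) = lie B ρ x f - lie B ρ x h := by
  ext v
  simp only [lie_apply, AlternatingMap.sub_apply, map_sub, Finset.sum_sub_distrib]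
  abel

theorem lie_add (B : g →ₗ[K] g →ₗ[K] g) (ρ : g →ₗ[K] Module.End K V) (x : g) {n : ℕ}
    (f h : AlternatingMap K g V (Fin n)) :
    lie B ρ x (f + h) = lie B ρ x f + lie B ρ x h := by
  ext v
  simp only [lie_apply, AlternatingMap.add_apply, map_add, Finset.sum_add_distrib]
  abel

theorem lie_lie (B : g →ₗ[K] g →ₗ[K] g) (ρ : g →ₗ[K] Module.End K V)
    (hj : ∀ x y z : g, B (B x y) z = B x (B y z) - B y (B x z))
    (hρ : ∀ x y : g, ρ (B x y) = ρ x * ρ y - ρ y * ρ x) (x y : g) : ∀ {n : ℕ}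
    (f : AlternatingMap K g V (Fin n)),
    lie B ρ (B x y) f = lie B ρ x (lie B ρ y f) - lie B ρ y (lie B ρ x f)
  | 0, f => by
    ext v
    simp [lie_apply, hρ]
  | n + 1, f => by
    apply curry_ext
    intro z
    simp only [curry_sub, curry_lie, lie_sub,
      lie_lie B ρ hj hρ x y (f.curryLeft z), hj, map_sub]
    abel

/-- Cartan's formula for the explicit differential. -/
theorem cartan (B : g →ₗ[K] g →ₗ[K] g) (ρ : g →ₗ[K] Module.End K V) (n : ℕ)
    (f : AlternatingMap K g V (Fin (n + 1))) (x : g) (y : Fin (n + 1) → g) :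
    ceDiff (fun u v => B u v) (fun u => ρ u) (n + 1) f (Fin.cons x y) =
      lie B ρ x f y - ceDiff (fun u v => B u v) (fun u => ρ u) n (f.curryLeft x) y := by
  have hT : ∀ j : Fin (n + 1), ((-1 : ℤ) ^ (j : ℕ)) • f (Fin.cons (B x (y j))
      (fun k => y (j.succAbove k))) = f (Function.update y j (B x (y j))) := by
    intro j
    have := f.map_insertNth j (B x (y j)) (fun k => y (j.succAbove k))
    rw [Matrix.vecCons] at this
    rw [← Fin.insertNth_removeNth]
    exact this.symm
  have hL : lie B ρ x f y = ρ x (f y) - ∑ j : Fin (n + 1), ((-1 : ℤ) ^ (j : ℕ)) •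
      f (Fin.cons (B x (y j)) (fun k => y (j.succAbove k))) := by
    rw [lie_apply]; simp only [hT]
  rw [hL]
  have hA : ∀ i : Fin (n + 1), (((Fin.cons x y : Fin (n + 2) → g) ∘ (i.succ).succAbove) :
      Fin (n + 1) → g) = Fin.cons x (fun k => y (i.succAbove k)) := by
    intro i
    funext k
    induction k using Fin.cases with
    | zero => simp
    | succ k => simp
  cases n with
  | zero =>
    have e1 : ∀ w : Fin 0 → g, (f.curryLeft x) w = f (Fin.cons x w) := fun _ => rfl
    simp only [ceDiff, e1]
    rw [Fin.sum_univ_succ, Fin.sum_univ_succ (n := 1), Fin.sum_univ_succ (n := 1)]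
    simp only [hA]
    simp [Fin.sum_univ_succ]
    have e2 : (fun k : Fin 0 => y k.succ) = Fin.elim0 := Subsingleton.elim _ _
    rw [e2]
    abel
  | succ m =>
    have hsw : ∀ (a b : g) (w : Fin m → g),
        f (Fin.cons a (Fin.cons b w)) = - f (Fin.cons b (Fin.cons a w)) := by
      intro a b w
      have h01 : (0 : Fin (m + 2)) ≠ 1 := by simp
      rw [← f.map_swap _ h01]
      congr 1
      funext k
      induction k using Fin.cases with
      | zero => simp
      | succ k =>
        induction k using Fin.cases with
        | zero => simp
        | succ k =>
          have h1 : (k.succ.succ : Fin (m + 2)) ≠ 0 := Fin.succ_ne_zero _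
          have h2 : (k.succ.succ : Fin (m + 2)) ≠ 1 := by
            intro h; exact Fin.succ_ne_zero k (Fin.succ_injective _ h)
          simp [Equiv.swap_apply_of_ne_of_ne h1 h2]
    have e1 : ∀ w : Fin (m + 1) → g, (f.curryLeft x) w = f (Fin.cons x w) := fun _ => rfl
    simp only [ceDiff, e1]
    have S1 : (∑ i : Fin (m + 3), ((-1 : ℤ) ^ (i : ℕ)) • ρ ((Fin.cons x y : Fin (m + 3) → g) i)
        (f ((Fin.cons x y : Fin (m + 3) → g) ∘ i.succAbove))) =
        ρ x (f y) - ∑ i : Fin (m + 2), ((-1 : ℤ) ^ (i : ℕ)) • ρ (y i)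
          (f (Fin.cons x (y ∘ i.succAbove))) := by
      rw [Fin.sum_univ_succ, sub_eq_add_neg, ← Finset.sum_neg_distrib]
      congr 1
      · simp only [Fin.val_zero, pow_zero, one_smul, Fin.cons_zero]
        rfl
      · refine Finset.sum_congr rfl fun i _ => ?_
        rw [hA, Fin.cons_succ, Fin.val_succ, pow_succ]
        simp
        rfl
    rw [S1, Fin.sum_univ_succ (n := m + 2)]
    have S2 : (∑ j : Fin (m + 3), if h : ((0 : Fin (m + 3)) : ℕ) < (j : ℕ) then
          ((-1 : ℤ) ^ (((0 : Fin (m + 3)) : ℕ) + (j : ℕ))) •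
            f (Fin.cons (B ((Fin.cons x y : Fin (m + 3) → g) 0)
              ((Fin.cons x y : Fin (m + 3) → g) j)) (fun k : Fin (m + 1) =>
              (Fin.cons x y : Fin (m + 3) → g) (j.succAbove ((Fin.castLT (0 : Fin (m + 3))
                (lt_of_lt_of_le h (Nat.lt_succ_iff.mp j.isLt))).succAbove k))))
        else 0) = - ∑ j : Fin (m + 2), ((-1 : ℤ) ^ (j : ℕ)) •
          f (Fin.cons (B x (y j)) (fun k => y (j.succAbove k))) := by
      rw [Fin.sum_univ_succ, ← Finset.sum_neg_distrib, dif_neg (lt_irrefl _), zero_add]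
      refine Finset.sum_congr rfl fun j _ => ?_
      have hs : ((-1 : ℤ) ^ (((0 : Fin (m + 3)) : ℕ) + (j.succ : ℕ))) = -(-1 : ℤ) ^ (j : ℕ) := by
        rw [Fin.val_zero, zero_add, Fin.val_succ, pow_succ, mul_neg_one]
      rw [dif_pos (by simp), hs, Fin.cons_zero, Fin.cons_succ, neg_smul]
      congr 4
      funext k
      have : (Fin.castLT (0 : Fin (m + 3)) (by simp) : Fin (m + 2)) = 0 := rfl
      rw [this]
      simp
    have S3 : (∑ i : Fin (m + 2), ∑ j : Fin (m + 3), if h : (i.succ : ℕ) < (j : ℕ) then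
          ((-1 : ℤ) ^ ((i.succ : ℕ) + (j : ℕ))) •
            f (Fin.cons (B ((Fin.cons x y : Fin (m + 3) → g) i.succ)
              ((Fin.cons x y : Fin (m + 3) → g) j)) (fun k : Fin (m + 1) =>
              (Fin.cons x y : Fin (m + 3) → g) (j.succAbove ((Fin.castLT i.succ
                (lt_of_lt_of_le h (Nat.lt_succ_iff.mp j.isLt))).succAbove k))))
        else 0) = - ∑ i : Fin (m + 2), ∑ j : Fin (m + 2), if h : (i : ℕ) < (j : ℕ) then
          ((-1 : ℤ) ^ ((i : ℕ) + (j : ℕ))) •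
            f (Fin.cons x (Fin.cons (B (y i) (y j)) (fun k : Fin m =>
              y (j.succAbove ((Fin.castLT i
                (lt_of_lt_of_le h (Nat.lt_succ_iff.mp j.isLt))).succAbove k)))))
        else 0 := by
      rw [← Finset.sum_neg_distrib]
      refine Finset.sum_congr rfl fun i _ => ?_
      rw [Fin.sum_univ_succ, ← Finset.sum_neg_distrib, dif_neg (by simp), zero_add]
      refine Finset.sum_congr rfl fun j _ => ?_
      by_cases h : (i : ℕ) < (j : ℕ)
      · rw [dif_pos (by simpa using h), dif_pos h, Fin.cons_succ, Fin.cons_succ, ← smul_neg,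
          ← hsw]
        congr 1
        · rw [Fin.val_succ, Fin.val_succ]; ring
        · congr 2
          funext k
          induction k using Fin.cases with
          | zero =>
            have : (Fin.castLT i.succ (lt_of_lt_of_le (by simpa using h)
              (Nat.lt_succ_iff.mp j.succ.isLt)) : Fin (m + 2)) = Fin.succ (Fin.castLT i
                (lt_of_lt_of_le h (Nat.lt_succ_iff.mp j.isLt))) := rfl
            rw [this]
            simp
          | succ k =>
            have : (Fin.castLT i.succ (lt_of_lt_of_le (by simpa using h)
              (Nat.lt_succ_iff.mp j.succ.isLt)) : Fin (m + 2)) = Fin.succ (Fin.castLT i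
                (lt_of_lt_of_le h (Nat.lt_succ_iff.mp j.isLt))) := rfl
            rw [this]
            simp
      · rw [dif_neg (by simpa using h), dif_neg h, neg_zero]
    rw [S2, S3]
    abel

theorem ceDiff_add (br : g → g → g) (ρ : g → Module.End K V) (n : ℕ) (f h : (Fin n → g) → V) :
    ceDiff br ρ n (f + h) = ceDiff br ρ n f + ceDiff br ρ n h := by
  funext x
  cases n with
  | zero => simp [ceDiff]
  | succ m =>
    have hd : ∀ (p : Prop) [Decidable p] (a b : p → V),
        (if h : p then a h + b h else 0) = (if h : p then a h else 0) + if h : p then b h else 0 := by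
      intro p _ a b
      split_ifs <;> simp
    simp only [ceDiff, Pi.add_apply, map_add, smul_add, Finset.sum_add_distrib, hd]
    abel

theorem ceDiff_smul (br : g → g → g) (ρ : g → Module.End K V) (n : ℕ) (c : K)
    (f : (Fin n → g) → V) :
    ceDiff br ρ n (c • f) = c • ceDiff br ρ n f := by
  funext x
  cases n with
  | zero => simp [ceDiff]
  | succ m =>
    simp only [ceDiff, Pi.smul_apply, map_smul, smul_add, Finset.smul_sum, smul_dite, smul_zero]
    simp only [smul_comm c]

/-- Assemble an alternating map from a linear family. -/
def build {n : ℕ} (φ : g →ₗ[K] AlternatingMap K g V (Fin n))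
    (h : ∀ (x : g) (v : Fin n → g) (j : Fin n), (j : ℕ) = 0 → v j = x → φ x v = 0) :
    AlternatingMap K g V (Fin (n + 1)) :=
  { (LinearMap.uncurryLeft (M := fun _ => g) ((AlternatingMap.toMultilinearMapLM (S := K)) ∘ₗ φ)) with
    map_eq_zero_of_eq' := by
      have h2 : ∀ (x : g) (v : Fin n → g) (j : Fin n), v j = x → φ x v = 0 := by
        intro x v j hj
        by_cases h0 : (j : ℕ) = 0
        · exact h x v j h0 hj
        · have hn : 0 < n := by have := j.isLt; omega
          have hne : (⟨0, hn⟩ : Fin n) ≠ j := by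
            intro e; apply h0; rw [← e]
          have := (φ x).map_swap v hne
          rw [h x _ ⟨0, hn⟩ rfl (by simpa using hj)] at this
          simpa using this.symm
      intro v i j hij hne
      change φ (v 0) (Fin.tail v) = 0
      induction i using Fin.cases with
      | zero =>
        induction j using Fin.cases with
        | zero => exact absurd rfl hne
        | succ j => exact h2 _ _ j hij.symm
      | succ i =>
        induction j using Fin.cases with
        | zero => exact h2 _ _ i hij
        | succ j =>
          exact (φ (v 0)).map_eq_zero_of_eq _ hij (fun e => hne (by rw [e])) }

theorem build_apply {n : ℕ} (φ : g →ₗ[K] AlternatingMap K g V (Fin n)) (h) (v : Fin (n + 1) → g) :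
    build φ h v = φ (v 0) (Fin.tail v) := rfl

theorem exists_alt (B : g →ₗ[K] g →ₗ[K] g) (ρ : g →ₗ[K] Module.End K V)
    (hB : ∀ x, B x x = 0) : ∀ n : ℕ, ∀ f : AlternatingMap K g V (Fin n),
    ∃ a : AlternatingMap K g V (Fin (n + 1)),
      ⇑a = ceDiff (fun u v => B u v) (fun u => ρ u) n f := by
  intro n
  induction n with
  | zero =>
    intro f
    refine ⟨build { toFun := fun x => (ρ x).compAlternatingMap f
                    map_add' := ?_
                    map_smul' := ?_ } ?_, ?_⟩
    · intro x y; ext v; simp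
    · intro c x; ext v; simp
    · intro x v j; exact j.elim0
    · funext x
      rw [build_apply]
      simp only [ceDiff, LinearMap.coe_mk, AddHom.coe_mk, LinearMap.compAlternatingMap_apply]
      congr 2
      exact Subsingleton.elim _ _
  | succ n ih =>
    intro f
    choose d hd using ih
    have dadd : ∀ a b, d (a + b) = d a + d b := by
      intro a b
      apply DFunLike.coe_injective
      rw [coe_add', hd, hd, hd, coe_add', ceDiff_add]
    have dsmul : ∀ (c : K) a, d (c • a) = c • d a := by
      intro c a
      apply DFunLike.coe_injective
      rw [coe_smul', hd, hd, coe_smul', ceDiff_smul]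
    have dzero : d 0 = 0 := by simpa using dsmul 0 0
    refine ⟨build { toFun := fun x => lie B ρ x f - d (f.curryLeft x)
                    map_add' := ?_
                    map_smul' := ?_ } ?_, ?_⟩
    · intro x y
      rw [map_add, dadd]
      ext v
      simp only [lie_apply, AlternatingMap.sub_apply, AlternatingMap.add_apply, map_add,
        LinearMap.add_apply, AlternatingMap.map_update_add, Finset.sum_add_distrib]
      abel
    · intro c x
      rw [map_smul, dsmul]
      ext v
      simp only [lie_apply, AlternatingMap.sub_apply, AlternatingMap.smul_apply, map_smul,
        LinearMap.smul_apply, AlternatingMap.map_update_smul, ← Finset.smul_sum, smul_sub,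
        RingHom.id_apply]
    · intro x v j hj hv
      obtain rfl : j = 0 := Fin.ext hj
      simp only [LinearMap.coe_mk, AddHom.coe_mk, AlternatingMap.sub_apply, hd]
      obtain ⟨w, rfl⟩ : ∃ w, v = Fin.cons x w := ⟨Fin.tail v, by rw [← hv, Fin.cons_self_tail]⟩
      cases n with
      | zero =>
        simp only [ceDiff, lie_apply, Fin.sum_univ_succ, Fin.cons_zero, hB]
        simp only [AlternatingMap.curryLeft_apply_apply, Matrix.vecCons]
        have e : (Fin.cons x w : Fin 1 → g) = Fin.cons x Fin.elim0 := by
          congr 1; exact Subsingleton.elim _ _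
        have hz : f (Fin.cons 0 Fin.elim0) = 0 := f.map_coord_zero 0 (by simp)
        rw [e]
        simp [hz]
      | succ m =>
        have hz : ceDiff (fun u v => B u v) (fun u => ρ u) m (0 : (Fin m → g) → V) = 0 := by
          simpa using ceDiff_smul (fun u v => B u v) (fun u => ρ u) m 0 0
        have h1 := congrArg (fun a => a w) (curry_lie B ρ x f x)
        simp only [hB, map_zero, sub_zero, AlternatingMap.curryLeft_apply_apply,
          Matrix.vecCons] at h1
        rw [cartan, AlternatingMap.curryLeft_same, h1, coe_zero', hz]
        simp
    · funext v
      rw [build_apply]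
      conv_rhs => rw [← Fin.cons_self_tail v]
      rw [cartan]
      simp [hd]

/-- The differential on alternating maps. -/
noncomputable def D (B : g →ₗ[K] g →ₗ[K] g) (ρ : g →ₗ[K] Module.End K V)
    (hB : ∀ x, B x x = 0) {n : ℕ} (f : AlternatingMap K g V (Fin n)) :
    AlternatingMap K g V (Fin (n + 1)) := (exists_alt B ρ hB n f).choose

theorem coe_D (B : g →ₗ[K] g →ₗ[K] g) (ρ : g →ₗ[K] Module.End K V)
    (hB : ∀ x, B x x = 0) {n : ℕ} (f : AlternatingMap K g V (Fin n)) :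
    ⇑(D B ρ hB f) = ceDiff (fun u v => B u v) (fun u => ρ u) n f :=
  (exists_alt B ρ hB n f).choose_spec

theorem D_add (B : g →ₗ[K] g →ₗ[K] g) (ρ : g →ₗ[K] Module.End K V)
    (hB : ∀ x, B x x = 0) {n : ℕ} (f h : AlternatingMap K g V (Fin n)) :
    D B ρ hB (f + h) = D B ρ hB f + D B ρ hB h := by
  apply DFunLike.coe_injective
  rw [coe_add', coe_D, coe_D, coe_D, coe_add', ceDiff_add]

theorem D_zero (B : g →ₗ[K] g →ₗ[K] g) (ρ : g →ₗ[K] Module.End K V)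
    (hB : ∀ x, B x x = 0) {n : ℕ} :
    D B ρ hB (0 : AlternatingMap K g V (Fin n)) = 0 := by
  have := D_add B ρ hB (0 : AlternatingMap K g V (Fin n)) 0
  simpa using this

theorem D_sub (B : g →ₗ[K] g →ₗ[K] g) (ρ : g →ₗ[K] Module.End K V)
    (hB : ∀ x, B x x = 0) {n : ℕ} (f h : AlternatingMap K g V (Fin n)) :
    D B ρ hB (f - h) = D B ρ hB f - D B ρ hB h := by
  have := D_add B ρ hB (f - h) h
  rw [sub_add_cancel] at this
  rw [this]; abel

theorem curry_D (B : g →ₗ[K] g →ₗ[K] g) (ρ : g →ₗ[K] Module.End K V)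
    (hB : ∀ x, B x x = 0) {n : ℕ} (f : AlternatingMap K g V (Fin (n + 1))) (x : g) :
    (D B ρ hB f).curryLeft x = lie B ρ x f - D B ρ hB (f.curryLeft x) := by
  ext v
  have := cartan B ρ n f x v
  rw [← coe_D B ρ hB, ← coe_D B ρ hB] at this
  exact this

theorem curry_D_zero (B : g →ₗ[K] g →ₗ[K] g) (ρ : g →ₗ[K] Module.End K V)
    (hB : ∀ x, B x x = 0) (f : AlternatingMap K g V (Fin 0)) (x : g) :
    (D B ρ hB f).curryLeft x = lie B ρ x f := by
  ext v
  rw [AlternatingMap.curryLeft_apply_apply, coe_D, lie_apply]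
  simp only [ceDiff, Finset.univ_eq_empty, Finset.sum_empty, sub_zero]
  congr 2
  exact Subsingleton.elim _ _

theorem lie_D (B : g →ₗ[K] g →ₗ[K] g) (ρ : g →ₗ[K] Module.End K V)
    (hB : ∀ x, B x x = 0)
    (hj : ∀ x y z : g, B (B x y) z = B x (B y z) - B y (B x z))
    (hρ : ∀ x y : g, ρ (B x y) = ρ x * ρ y - ρ y * ρ x) (x : g) : ∀ {n : ℕ}
    (f : AlternatingMap K g V (Fin n)),
    lie B ρ x (D B ρ hB f) = D B ρ hB (lie B ρ x f)
  | 0, f => by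
    apply curry_ext
    intro y
    rw [curry_lie, curry_D_zero, curry_D_zero, curry_D_zero, lie_lie B ρ hj hρ]
    abel
  | n + 1, f => by
    apply curry_ext
    intro y
    rw [curry_lie, curry_D, curry_D, curry_D, lie_lie B ρ hj hρ, curry_lie, lie_sub, D_sub,
      lie_D B ρ hB hj hρ x (f.curryLeft y)]
    abel

theorem D_D (B : g →ₗ[K] g →ₗ[K] g) (ρ : g →ₗ[K] Module.End K V)
    (hB : ∀ x, B x x = 0)
    (hj : ∀ x y z : g, B (B x y) z = B x (B y z) - B y (B x z))
    (hρ : ∀ x y : g, ρ (B x y) = ρ x * ρ y - ρ y * ρ x) : ∀ {n : ℕ}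
    (f : AlternatingMap K g V (Fin n)),
    D B ρ hB (D B ρ hB f) = 0
  | 0, f => by
    apply curry_ext
    intro y
    rw [curry_D, curry_D_zero, lie_D B ρ hB hj hρ]
    simp
  | n + 1, f => by
    apply curry_ext
    intro y
    rw [curry_D, curry_D, lie_D B ρ hB hj hρ, D_sub, D_D B ρ hB hj hρ (f.curryLeft y)]
    simp

theorem lie_BB (B B' : g →ₗ[K] g →ₗ[K] g) (ρ ρ' : g →ₗ[K] Module.End K V) (x : g) {n : ℕ}
    (f : AlternatingMap K g V (Fin n)) :
    lie (B + B') (ρ + ρ') x f = lie B ρ x f + lie B' ρ' x f := by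
  ext v
  simp only [lie_apply, AlternatingMap.add_apply, LinearMap.add_apply,
    AlternatingMap.map_update_add, Finset.sum_add_distrib]
  abel

theorem D_BB (B B' : g →ₗ[K] g →ₗ[K] g) (ρ ρ' : g →ₗ[K] Module.End K V)
    (hB : ∀ x, B x x = 0) (hB' : ∀ x, B' x x = 0) (hBB : ∀ x, (B + B') x x = 0) : ∀ {n : ℕ}
    (f : AlternatingMap K g V (Fin n)),
    D (B + B') (ρ + ρ') hBB f = D B ρ hB f + D B' ρ' hB' f
  | 0, f => by
    apply curry_ext
    intro y
    rw [AlternatingMap.curryLeft_add, LinearMap.add_apply, curry_D_zero, curry_D_zero,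
      curry_D_zero, lie_BB]
  | n + 1, f => by
    apply curry_ext
    intro y
    rw [AlternatingMap.curryLeft_add, LinearMap.add_apply, curry_D, curry_D,
      curry_D, lie_BB, D_BB B B' ρ ρ' hB hB' hBB (f.curryLeft y)]
    abel

theorem D_mix (B B' : g →ₗ[K] g →ₗ[K] g) (ρ ρ' : g →ₗ[K] Module.End K V)
    (hB : ∀ x, B x x = 0) (hB' : ∀ x, B' x x = 0)
    (hj : ∀ x y z : g, B (B x y) z = B x (B y z) - B y (B x z))
    (hj' : ∀ x y z : g, B' (B' x y) z = B' x (B' y z) - B' y (B' x z))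
    (hc : ∀ x y z : g, B (B' x y) z + B' (B x y) z
      = B x (B' y z) - B y (B' x z) + (B' x (B y z) - B' y (B x z)))
    (hρ : ∀ x y : g, ρ (B x y) = ρ x * ρ y - ρ y * ρ x)
    (hρ' : ∀ x y : g, ρ' (B' x y) = ρ' x * ρ' y - ρ' y * ρ' x)
    (hmix : ∀ x y : g, ρ (B' x y) + ρ' (B x y)
      = ρ x * ρ' y - ρ' y * ρ x + ρ' x * ρ y - ρ y * ρ' x) {n : ℕ}
    (f : AlternatingMap K g V (Fin n)) :
    D B ρ hB (D B' ρ' hB' f) + D B' ρ' hB' (D B ρ hB f) = 0 := by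
  have hBB : ∀ x, (B + B') x x = 0 := by intro x; simp [hB, hB']
  have key := D_D (B + B') (ρ + ρ') hBB (by
      intro x y z
      have e : (B + B') ((B + B') x y) z = B (B x y) z + B' (B' x y) z +
          (B (B' x y) z + B' (B x y) z) := by
        simp only [LinearMap.add_apply, map_add]; abel
      rw [e, hj, hj', hc]
      simp only [LinearMap.add_apply, map_add]; abel) (by
      intro x y
      have e : (ρ + ρ') ((B + B') x y) = ρ (B x y) + ρ' (B' x y) +
          (ρ (B' x y) + ρ' (B x y)) := by
        simp only [LinearMap.add_apply, map_add]; abel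
      rw [e, hρ, hρ', hmix]
      simp only [LinearMap.add_apply]
      noncomm_ring) f
  rw [D_BB B B' ρ ρ' hB hB', D_BB B B' ρ ρ' hB hB', D_add, D_add, D_D B ρ hB hj hρ,
    D_D B' ρ' hB' hj' hρ'] at key
  simpa using key

end CE

/-- `∂_c ∘ ∂_c = 0` on the compatible cochain complex of a compatible Lie
algebra with coefficients in a representation, for every `n ≥ 1`. -/
theorem stmt_3
    (B B' : g →ₗ[K] g →ₗ[K] g) (ρ ρ' : g →ₗ[K] Module.End K V)
    (hBskew : ∀ x y : g, B x y = - B y x)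
    (hB'skew : ∀ x y : g, B' x y = - B' y x)
    (hBjac : ∀ x y z : g, B (B x y) z + B (B y z) x + B (B z x) y = 0)
    (hB'jac : ∀ x y z : g, B' (B' x y) z + B' (B' y z) x + B' (B' z x) y = 0)
    (hcompat : ∀ x y z : g, B (B' x y) z + B' (B x y) z
      = B (B' x z) y + B' (B x z) y + B x (B' y z) + B' x (B y z))
    (hρ : ∀ x y : g, ρ (B x y) = ρ x * ρ y - ρ y * ρ x)
    (hρ' : ∀ x y : g, ρ' (B' x y) = ρ' x * ρ' y - ρ' y * ρ' x)
    (hmix : ∀ x y : g, ρ (B' x y) + ρ' (B x y)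
      = ρ x * ρ' y - ρ' y * ρ x + ρ' x * ρ y - ρ y * ρ' x)
    (n : ℕ) (hn : 1 ≤ n) (F : Fin n → AlternatingMap K g V (Fin n))
    (i : Fin (n + 2)) (x : Fin (n + 2) → g) :
    compDiff (fun u v => B u v) (fun u v => B' u v) (fun u => ρ u) (fun u => ρ' u) (n + 1)
      (compDiff (fun u v => B u v) (fun u v => B' u v) (fun u => ρ u) (fun u => ρ' u) n
        (fun j => ⇑(F j))) i x = 0 := by
  have two : ∀ u : g, u = -u → u = 0 := by
    intro u hu
    have h2 : (2 : K) • u = 0 := by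
      rw [two_smul]; nth_rewrite 1 [hu]; simp
    exact (smul_eq_zero.mp h2).resolve_left two_ne_zero
  have hB : ∀ u, B u u = 0 := fun u => two _ (hBskew u u)
  have hB' : ∀ u, B' u u = 0 := fun u => two _ (hB'skew u u)
  have hj : ∀ x y z : g, B (B x y) z = B x (B y z) - B y (B x z) := by
    intro x y z
    have := hBjac x y z
    rw [hBskew (B y z) x, hBskew (B z x) y, hBskew z x, map_neg] at this
    rw [← sub_eq_zero, ← this]; abel
  have hj' : ∀ x y z : g, B' (B' x y) z = B' x (B' y z) - B' y (B' x z) := by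
    intro x y z
    have := hB'jac x y z
    rw [hB'skew (B' y z) x, hB'skew (B' z x) y, hB'skew z x, map_neg] at this
    rw [← sub_eq_zero, ← this]; abel
  have hc : ∀ x y z : g, B (B' x y) z + B' (B x y) z
      = B x (B' y z) - B y (B' x z) + (B' x (B y z) - B' y (B x z)) := by
    intro x y z
    rw [hcompat, hBskew (B' x z) y, hB'skew (B x z) y]; abel
  have d1 := fun f : AlternatingMap K g V (Fin n) => CE.D_D B ρ hB hj hρ f
  have d2 := fun f : AlternatingMap K g V (Fin n) => CE.D_D B' ρ' hB' hj' hρ' f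
  have d3 := fun f : AlternatingMap K g V (Fin n) =>
    CE.D_mix B B' ρ ρ' hB hB' hj hj' hc hρ hρ' hmix f
  have hinner : ∀ k : Fin (n + 1),
      compDiff (fun u v => B u v) (fun u v => B' u v) (fun u => ρ u) (fun u => ρ' u) n
        (fun j => ⇑(F j)) k = ⇑((if h : (k : ℕ) < n then CE.D B ρ hB (F ⟨k, h⟩) else 0) +
          (if h : 0 < (k : ℕ) then CE.D B' ρ' hB' (F ⟨(k : ℕ) - 1, by have := k.isLt; omega⟩)
            else 0)) := by
    intro k
    unfold compDiff
    split_ifs <;> simp [CE.coe_D, CE.coe_add', CE.coe_zero']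
  have hfun := funext hinner
  rw [hfun]
  unfold compDiff
  simp only [← CE.coe_D B ρ hB, ← CE.coe_D B' ρ' hB']
  obtain ⟨i, hi⟩ := i
  rcases Nat.eq_zero_or_pos i with rfl | hpos
  · have h0 : 0 < n := hn
    simp [h0, d1]
  · by_cases hlast : i < n + 1
    · have h1 : i - 1 < n := by omega
      simp only [hlast, hpos, h1, dif_pos, CE.D_add]
      have e1 : CE.D B ρ hB (if h : i < n then CE.D B ρ hB (F ⟨i, h⟩) else 0) = 0 := by
        split_ifs
        · exact d1 _
        · exact CE.D_zero _ _ _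
      have e2 : CE.D B' ρ' hB' (if h : 0 < i - 1 then
          CE.D B' ρ' hB' (F ⟨i - 1 - 1, by omega⟩) else 0) = 0 := by
        split_ifs
        · exact d2 _
        · exact CE.D_zero _ _ _
      rw [e1, e2, zero_add, add_zero]
      have := congrArg (fun a => a x) (d3 (F ⟨i - 1, h1⟩))
      simpa using this
    · have h1 : ¬ (i - 1 < n) := by omega
      have h2 : 0 < i - 1 := by omega
      simp [hlast, hpos, h1, h2, d2]
end

section
/- Let (g,[·,·],[·,·]') be a compatible Lie algebra, and let μ, μ' ∈ Hom(∧²g, g) denote the two brackets regarded as skew-symmetric bilinear maps. Then for every m ≥ 0 and every alternating (m+1)-linear map f: g^{m+1} → g, one has [μ, [μ', f]_NR]_NR + [μ', [μ, f]_NR]_NR = 0; that is, the operators ∂_μ = [μ,−]_NR and ∂_{μ'} = [μ',−]_NR on alternating multilinear maps anticommute. -/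
variable {K : Type*} [Field K] [CharZero K]
variable {g : Type*} [AddCommGroup g] [Module K g]

/-- The operation `f ⋄ h` for an `(m+1)`-linear map `f` and an `(n+1)`-linear map `h`:
`(f ⋄ h)(x₁,…,x_{m+n+1}) = Σ_{σ ∈ Sh(n+1,m)} sgn(σ)
  f(h(x_{σ(1)},…,x_{σ(n+1)}), x_{σ(n+2)},…,x_{σ(m+n+1)})`,
where the sum is over permutations that are strictly increasing on the first `n+1` and on
the last `m` positions. -/
def diamond (m n : ℕ) (f : (Fin (m + 1) → g) → g) (h : (Fin (n + 1) → g) → g) :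
    (Fin (m + n + 1) → g) → g :=
  fun x =>
    ∑ σ ∈ Finset.univ.filter (fun σ : Equiv.Perm (Fin (m + n + 1)) =>
        (∀ i j : Fin (m + n + 1), i < j → (j : ℕ) < n + 1 → σ i < σ j) ∧
        (∀ i j : Fin (m + n + 1), i < j → n + 1 ≤ (i : ℕ) → σ i < σ j)),
      (Equiv.Perm.sign σ : ℤ) •
        f (Fin.cons (h (fun k : Fin (n + 1) => x (σ (Fin.castLE (by omega) k))))
          (fun k : Fin m => x (σ ⟨n + 1 + (k : ℕ), by have := k.isLt; omega⟩)))

/-- The Nijenhuis–Richardson bracket `[f,h]_NR = f ⋄ h − (−1)^{mn} h ⋄ f` of an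
`(m+1)`-linear map `f` and an `(n+1)`-linear map `h`. -/
def nrNR (m n : ℕ) (f : (Fin (m + 1) → g) → g) (h : (Fin (n + 1) → g) → g) :
    (Fin (m + n + 1) → g) → g :=
  fun x =>
    diamond m n f h x -
      ((-1 : ℤ) ^ (m * n)) •
        diamond n m h f (fun i => x (Fin.cast (by omega) i))


namespace NRaux

section
variable (B B' : g →ₗ[K] g →ₗ[K] g)

/-- contraction with a vector in the first slot -/
def ct {n : ℕ} (y : g) (F : (Fin (n + 1) → g) → g) : (Fin n → g) → g :=
  fun v => F (Fin.cons y v)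

/-- Lie derivative, recursively -/
def L (y : g) : (n : ℕ) → ((Fin n → g) → g) → (Fin n → g) → g
  | 0, F, x => B y (F x)
  | n + 1, F, x => L y n (ct (x 0) F) (Fin.tail x) - F (Fin.cons (B y (x 0)) (Fin.tail x))

/-- Chevalley-Eilenberg differential, recursively -/
def d : (n : ℕ) → ((Fin n → g) → g) → (Fin (n + 1) → g) → g
  | 0, F, x => B (x 0) (F (Fin.tail x))
  | n + 1, F, x => L B (x 0) (n + 1) F (Fin.tail x) - d n (ct (x 0) F) (Fin.tail x)

theorem ext_ct {n : ℕ} {F G : (Fin (n + 1) → g) → g} (h : ∀ y, ct y F = ct y G) : F = G := by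
  funext x
  have := congrFun (h (x 0)) (Fin.tail x)
  simpa [ct] using this

theorem ct_add {n : ℕ} (y : g) (F G : (Fin (n + 1) → g) → g) : ct y (F + G) = ct y F + ct y G := rfl
theorem ct_sub {n : ℕ} (y : g) (F G : (Fin (n + 1) → g) → g) : ct y (F - G) = ct y F - ct y G := rfl
theorem ct_neg {n : ℕ} (y : g) (F : (Fin (n + 1) → g) → g) : ct y (-F) = - ct y F := rfl
theorem ct_zero {n : ℕ} (y : g) : ct y (0 : (Fin (n + 1) → g) → g) = 0 := rfl

theorem L_zero' (y : g) (F : (Fin 0 → g) → g) : L B y 0 F = fun x => B y (F x) := rfl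

theorem ct_L {n : ℕ} (y z : g) (F : (Fin (n + 1) → g) → g) :
    ct z (L B y (n + 1) F) = L B y n (ct z F) - ct (B y z) F := by
  funext v
  simp [ct, L]

theorem ct_d_zero (y : g) (F : (Fin 0 → g) → g) : ct y (d B 0 F) = L B y 0 F := by
  funext v
  simp [ct, L, d]

theorem ct_d {n : ℕ} (y : g) (F : (Fin (n + 1) → g) → g) :
    ct y (d B (n + 1) F) = L B y (n + 1) F - d B n (ct y F) := by
  funext v
  simp [ct, d]

theorem L_add (y : g) {n : ℕ} (F G : (Fin n → g) → g) :
    L B y n (F + G) = L B y n F + L B y n G := by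
  induction n with
  | zero => funext x; simp [L]
  | succ n ih =>
    apply ext_ct; intro z
    simp only [ct_L, ct_add, ih]; abel

theorem L_neg (y : g) {n : ℕ} (F : (Fin n → g) → g) :
    L B y n (-F) = - L B y n F := by
  induction n with
  | zero => funext x; simp [L]
  | succ n ih =>
    apply ext_ct; intro z
    simp only [ct_L, ct_neg, ih]; abel

theorem L_sub (y : g) {n : ℕ} (F G : (Fin n → g) → g) :
    L B y n (F - G) = L B y n F - L B y n G := by
  rw [sub_eq_add_neg, L_add, L_neg, sub_eq_add_neg]

theorem d_add {n : ℕ} (F G : (Fin n → g) → g) :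
    d B n (F + G) = d B n F + d B n G := by
  induction n with
  | zero => apply ext_ct; intro z; simp only [ct_d_zero, ct_add, L_add]
  | succ n ih =>
    apply ext_ct; intro z
    simp only [ct_d, ct_add, ih, L_add]; abel

theorem d_neg {n : ℕ} (F : (Fin n → g) → g) :
    d B n (-F) = - d B n F := by
  induction n with
  | zero => apply ext_ct; intro z; simp only [ct_d_zero, ct_neg, L_neg]
  | succ n ih =>
    apply ext_ct; intro z
    simp only [ct_d, ct_neg, ih, L_neg]; abel

theorem d_sub {n : ℕ} (F G : (Fin n → g) → g) :
    d B n (F - G) = d B n F - d B n G := by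
  rw [sub_eq_add_neg, d_add, d_neg, sub_eq_add_neg]

/-- additivity in every slot -/
def MA : (n : ℕ) → ((Fin n → g) → g) → Prop
  | 0, _ => True
  | n + 1, F => (∀ y z, ct (y + z) F = ct y F + ct z F) ∧ ∀ y, MA n (ct y F)

theorem MA_neg {n : ℕ} {F : (Fin (n + 1) → g) → g} (h : MA (n + 1) F) (y : g) :
    ct (-y) F = - ct y F := by
  have h0 : ct 0 F = 0 := by
    have := h.1 0 0
    simpa using this
  have := h.1 (-y) y
  rw [neg_add_cancel, h0] at this
  exact eq_neg_of_add_eq_zero_left this.symm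

theorem LL (hB : ∀ x y : g, B x y = - B y x) (hB' : ∀ x y : g, B' x y = - B' y x)
    (hcompat : ∀ x y z : g, B (B' x y) z + B' (B x y) z
      = B (B' x z) y + B' (B x z) y + B x (B' y z) + B' x (B y z))
    (y z : g) {n : ℕ} (F : (Fin n → g) → g) (hF : MA n F) :
    L B y n (L B' z n F) + L B' y n (L B z n F) - L B z n (L B' y n F) - L B' z n (L B y n F)
      = L B (B' y z) n F + L B' (B y z) n F := by
  have key : ∀ y z w, B y (B' z w) + B' y (B z w) - B z (B' y w) - B' z (B y w)
      = B (B' y z) w + B' (B y z) w := by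
    intro y z w
    have h := hcompat y z w
    rw [hB (B' y w) z, hB' (B y w) z] at h
    rw [h]; abel
  induction n with
  | zero => funext x; simpa [L] using key y z (F x)
  | succ n ih =>
    apply ext_ct; intro w
    have h1 := ih (ct w F) (hF.2 w)
    have h2 : ct (B y (B' z w)) F + ct (B' y (B z w)) F - ct (B z (B' y w)) F
        - ct (B' z (B y w)) F = ct (B (B' y z) w) F + ct (B' (B y z) w) F := by
      rw [← hF.1, ← hF.1, ← key y z w, sub_eq_add_neg, sub_eq_add_neg, sub_eq_add_neg,
        sub_eq_add_neg, ← MA_neg hF, ← MA_neg hF, ← hF.1, ← hF.1]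
    simp only [ct_L, ct_add, ct_sub, L_sub]
    rw [← sub_eq_zero] at h1 h2 ⊢
    rw [← sub_eq_zero.mpr (h1.trans h2.symm)]
    abel

theorem Ld (hB : ∀ x y : g, B x y = - B y x) (hB' : ∀ x y : g, B' x y = - B' y x)
    (hcompat : ∀ x y z : g, B (B' x y) z + B' (B x y) z
      = B (B' x z) y + B' (B x z) y + B x (B' y z) + B' x (B y z))
    (y : g) {n : ℕ} (F : (Fin n → g) → g) (hF : MA n F) :
    L B y (n + 1) (d B' n F) + L B' y (n + 1) (d B n F)
      = d B n (L B' y n F) + d B' n (L B y n F) := by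
  induction n with
  | zero =>
    apply ext_ct; intro z
    have h := LL B B' hB hB' hcompat y z F hF
    simp only [ct_L, ct_add, ct_d_zero]
    rw [← sub_eq_zero] at h ⊢
    rw [← h]
    abel
  | succ n ih =>
    apply ext_ct; intro z
    have h := LL B B' hB hB' hcompat y z F hF
    have h1 := ih (ct z F) (hF.2 z)
    simp only [ct_L, ct_add, ct_d, L_sub, d_sub]
    rw [sub_sub, sub_eq_iff_eq_add] at h
    rw [← sub_eq_zero] at h h1 ⊢
    rw [← sub_eq_zero.mpr (h.trans h1.symm)]
    abel

theorem dd (hB : ∀ x y : g, B x y = - B y x) (hB' : ∀ x y : g, B' x y = - B' y x)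
    (hcompat : ∀ x y z : g, B (B' x y) z + B' (B x y) z
      = B (B' x z) y + B' (B x z) y + B x (B' y z) + B' x (B y z))
    {n : ℕ} (F : (Fin n → g) → g) (hF : MA n F) :
    d B (n + 1) (d B' n F) + d B' (n + 1) (d B n F) = 0 := by
  induction n with
  | zero =>
    apply ext_ct; intro z
    have h := Ld B B' hB hB' hcompat z F hF
    simp only [ct_d, ct_add, ct_d_zero, ct_zero]
    rw [← sub_eq_zero] at h
    rw [← h]; abel
  | succ n ih =>
    apply ext_ct; intro z
    have h := Ld B B' hB hB' hcompat z F hF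
    have h1 := ih (ct z F) (hF.2 z)
    simp only [ct_d, ct_add, ct_zero, d_sub]
    rw [← sub_eq_zero] at h
    rw [← add_zero 0]
    nth_rewrite 1 [← h]
    rw [← h1]; abel

/-- skew-symmetry in adjacent slots -/
def SK : (n : ℕ) → ((Fin n → g) → g) → Prop
  | 0, _ => True
  | 1, _ => True
  | n + 2, F => (∀ y z, ct y (ct z F) = - ct z (ct y F)) ∧ ∀ y, SK (n + 1) (ct y F)

theorem SK_sub : {n : ℕ} → (F G : (Fin n → g) → g) → SK n F → SK n G → SK n (F - G)
  | 0, _, _, _, _ => trivial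
  | 1, _, _, _, _ => trivial
  | n + 2, F, G, hF, hG => by
    refine ⟨fun y z => ?_, fun y => ?_⟩
    · simp only [ct_sub, hF.1 y z, hG.1 y z]; abel
    · exact SK_sub _ _ (hF.2 y) (hG.2 y)

theorem SK_ct {n : ℕ} {F : (Fin (n + 1) → g) → g} (h : SK (n + 1) F) (y : g) : SK n (ct y F) := by
  cases n with
  | zero => trivial
  | succ n => exact h.2 y

theorem SK_L (w : g) : {n : ℕ} → (F : (Fin n → g) → g) → SK n F → SK n (L B w n F)
  | 0, _, _ => trivial
  | 1, _, _ => trivial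
  | n + 2, F, hF => by
    refine ⟨fun y z => ?_, fun y => ?_⟩
    · simp only [ct_L, ct_sub, hF.1 y z, hF.1 (B w y) z, hF.1 y (B w z), L_neg]; abel
    · rw [ct_L]; exact SK_sub _ _ (SK_L w _ (hF.2 y)) (hF.2 _)

theorem SK_d (hB : ∀ x y : g, B x y = - B y x) :
    {n : ℕ} → (F : (Fin n → g) → g) → MA n F → SK n F → SK (n + 1) (d B n F)
  | 0, _, _, _ => trivial
  | 1, F, hM, hF => by
    refine ⟨fun y z => ?_, fun y => trivial⟩
    simp only [ct_L, ct_sub, ct_d, ct_d_zero, hB z y, MA_neg hM]; abel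
  | n + 2, F, hM, hF => by
    refine ⟨fun y z => ?_, fun y => ?_⟩
    · simp only [ct_L, ct_sub, ct_d, hB z y, MA_neg hM, hF.1 y z, d_neg]; abel
    · rw [ct_d]; exact SK_sub _ _ (SK_L B y _ hF) (SK_d hB _ (hM.2 y) (hF.2 y))

theorem MA_alt : {n : ℕ} → (f : AlternatingMap K g g (Fin n)) → MA n f
  | 0, _ => trivial
  | n + 1, f => ⟨fun y z => by
      have := congrArg (fun h : AlternatingMap K g g (Fin n) => (h : (Fin n → g) → g))
        (f.curryLeft.map_add y z)
      exact this, fun y => MA_alt (f.curryLeft y)⟩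

theorem SK_alt : {n : ℕ} → (f : AlternatingMap K g g (Fin n)) → SK n f
  | 0, _ => trivial
  | 1, _ => trivial
  | n + 2, f => ⟨fun y z => by
      funext v
      have h := f.map_swap (v := Fin.cons y (Fin.cons z v)) (i := 0) (j := 1) (by simp)
      simp only [ct, Pi.neg_apply]
      rw [← h]
      congr 1
      funext i
      refine Fin.cases ?_ (fun i => Fin.cases ?_ (fun i => ?_) i) i
      · simp [Fin.cons]
        rfl
      · simp
      · simp only [Function.comp]
        rw [Equiv.swap_apply_of_ne_of_ne (by simp) (by simp [Fin.ext_iff])]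
        simp, fun y => SK_alt (f.curryLeft y)⟩

/-- explicit form of the derivation part -/
def T (y : g) (n : ℕ) (F : (Fin (n + 1) → g) → g) (x : Fin (n + 1) → g) : g :=
  ∑ j : Fin (n + 1), ((-1 : ℤ) ^ (j : ℕ)) •
    F (Fin.cons (B y (x j)) (fun k => x (j.succAbove k)))

def S (n : ℕ) (F : (Fin (n + 1) → g) → g) (x : Fin (n + 2) → g) : g :=
  ∑ i : Fin (n + 2), ∑ j : Fin (n + 1), if i ≤ j.castSucc then ((-1 : ℤ) ^ ((i : ℕ) + j)) •
    F (Fin.cons (B (x i) (x (i.succAbove j))) (fun k => x (i.succAbove (j.succAbove k)))) else 0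

def R (n : ℕ) (F : (Fin n → g) → g) (x : Fin (n + 1) → g) : g :=
  ∑ i : Fin (n + 1), ((-1 : ℤ) ^ (i : ℕ)) • B (x i) (F (fun k => x (i.succAbove k)))

theorem L_eq (y : g) {n : ℕ} (F : (Fin (n + 1) → g) → g) (hF : SK (n + 1) F) (x : Fin (n + 1) → g) :
    L B y (n + 1) F x = B y (F x) - T B y n F x := by
  induction n with
  | zero =>
    simp [L, T, ct]
    congr 2
  | succ n ih =>
    rw [L, ih _ (hF.2 _), sub_sub]
    congr 1
    · simp [ct]
    · rw [T, T, Fin.sum_univ_succ (n := n + 1), add_comm]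
      congr 1
      · simp; rfl
      · apply Finset.sum_congr rfl
        intro j _
        have h := congrFun (hF.1 (B y (x j.succ)) (x 0)) (fun k => x (j.succAbove k).succ)
        simp only [ct, Fin.val_succ, pow_succ, Pi.neg_apply] at h ⊢
        rw [mul_neg_one, neg_smul, ← smul_neg, Fin.tail]
        congr 1
        convert h using 3
        congr 2
        funext k
        refine Fin.cases ?_ (fun i => ?_) k
        · simp
        · refine Fin.cases ?_ (fun i => ?_) i <;> simp

theorem R_succ {n : ℕ} (F : (Fin (n + 1) → g) → g) (x : Fin (n + 2) → g) :
    R B (n + 1) F x = B (x 0) (F (Fin.tail x)) - R B n (ct (x 0) F) (Fin.tail x) := by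
  rw [R, R, Fin.sum_univ_succ, sub_eq_add_neg, ← Finset.sum_neg_distrib]
  congr 1
  · simp; rfl
  · apply Finset.sum_congr rfl
    intro j _
    simp only [Fin.val_succ, pow_succ, mul_neg_one, neg_smul, Fin.tail, ct]
    congr 4
    funext k
    refine Fin.cases ?_ (fun i => ?_) k <;> simp

theorem S_succ {n : ℕ} (F : (Fin (n + 2) → g) → g) (hF : SK (n + 2) F) (x : Fin (n + 3) → g) :
    S B (n + 1) F x = T B (x 0) (n + 1) F (Fin.tail x) - S B n (ct (x 0) F) (Fin.tail x) := by
  rw [S, S, Fin.sum_univ_succ, sub_eq_add_neg, ← Finset.sum_neg_distrib]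
  congr 1
  · simp [T]; rfl
  · apply Finset.sum_congr rfl
    intro i _
    rw [Fin.sum_univ_succ, ← Finset.sum_neg_distrib]
    rw [if_neg (by simp [Fin.le_def]), zero_add]
    apply Finset.sum_congr rfl
    intro j _
    have e : (i.succ ≤ j.succ.castSucc) ↔ (i ≤ j.castSucc) := by simp [Fin.le_def]
    simp only [e]
    split_ifs
    · have h := congrFun (hF.1 (x 0) (B (x i.succ) (x (i.succAbove j).succ)))
        (fun k => x (i.succAbove (j.succAbove k)).succ)
      have hs : ((-1 : ℤ) ^ ((i.succ : ℕ) + (j.succ : ℕ))) = (-1) ^ ((i : ℕ) + j) := by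
        simp only [Fin.val_succ, pow_add, pow_one]; ring
      simp only [ct, Pi.neg_apply] at h ⊢
      rw [hs, ← smul_neg]
      congr 1
      simp only [Fin.tail, Fin.succ_succAbove_succ]
      rw [← h]
      congr 2
      funext k
      refine Fin.cases ?_ (fun i => ?_) k <;> simp
    · simp

theorem d_eq {n : ℕ} (F : (Fin (n + 1) → g) → g) (hF : SK (n + 1) F) (x : Fin (n + 2) → g) :
    d B (n + 1) F x = R B (n + 1) F x - S B n F x := by
  induction n with
  | zero =>
    rw [d, L_eq B _ _ hF, R_succ]
    have h1 : d B 0 (ct (x 0) F) (Fin.tail x) = R B 0 (ct (x 0) F) (Fin.tail x) := by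
      simp [d, R]; congr 2
    have h2 : S B 0 F x = T B (x 0) 0 F (Fin.tail x) := by
      simp [S, T, Fin.sum_univ_succ, Fin.le_def]
      congr 2
    rw [h1, h2]; abel
  | succ n ih =>
    rw [d, L_eq B _ _ hF, R_succ, ih _ (hF.2 _), S_succ B _ hF]
    abel

theorem perm_ext' {N a : ℕ} (σ τ : Equiv.Perm (Fin N)) (e : Fin a → Fin N)
    (hσ : StrictMono (σ ∘ e)) (hτ : StrictMono (τ ∘ e)) (h : ∀ i, i ∉ Set.range e → σ i = τ i) :
    σ = τ := by
  have h1 : Set.range (σ ∘ e) = Set.range (τ ∘ e) := by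
    rw [Set.range_comp, Set.range_comp, ← compl_inj_iff, ← Set.image_compl_eq σ.bijective,
      ← Set.image_compl_eq τ.bijective]
    exact Set.image_congr (fun i hi => h i hi)
  have h2 := (hσ.range_inj hτ).1 h1
  ext i
  by_cases hi : i ∈ Set.range e
  · obtain ⟨k, rfl⟩ := hi
    exact congrArg Fin.val (congrFun h2 k)
  · rw [h i hi]

def pA (n : ℕ) (i : Fin (n + 2)) : Equiv.Perm (Fin (n + 2)) := i.cycleRange.symm * finRotate (n + 2)

theorem pA_last (n : ℕ) (i : Fin (n + 2)) : pA n i (Fin.last _) = i := by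
  simp [pA, finRotate_last]

theorem pA_castSucc (n : ℕ) (i : Fin (n + 2)) (k : Fin (n + 1)) :
    pA n i k.castSucc = i.succAbove k := by
  simp [pA, finRotate_succ_apply, Fin.coeSucc_eq_succ]

theorem pA_sign (n : ℕ) (i : Fin (n + 2)) :
    ((Equiv.Perm.sign (pA n i) : ℤˣ) : ℤ) = (-1) ^ ((i : ℕ) + (n + 1)) := by
  simp [pA, Fin.sign_cycleRange, sign_finRotate, pow_add]

def pB (n : ℕ) (i : Fin (n + 2)) (j : Fin (n + 1)) : Equiv.Perm (Fin (n + 2)) :=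
  i.cycleRange.symm * Equiv.Perm.decomposeFin.symm (0, j.cycleRange.symm)

theorem pB_zero (n : ℕ) (i : Fin (n + 2)) (j : Fin (n + 1)) : pB n i j 0 = i := by
  simp [pB]

theorem pB_one (n : ℕ) (i : Fin (n + 2)) (j : Fin (n + 1)) : pB n i j 1 = i.succAbove j := by
  rw [← Fin.succ_zero_eq_one, pB, Equiv.Perm.mul_apply, Equiv.Perm.decomposeFin_symm_apply_succ]
  simp

theorem pB_succ (n : ℕ) (i : Fin (n + 2)) (j : Fin (n + 1)) (k : Fin n) :
    pB n i j k.succ.succ = i.succAbove (j.succAbove k) := by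
  rw [pB, Equiv.Perm.mul_apply, Equiv.Perm.decomposeFin_symm_apply_succ]
  simp

theorem pB_sign (n : ℕ) (i : Fin (n + 2)) (j : Fin (n + 1)) :
    ((Equiv.Perm.sign (pB n i j) : ℤˣ) : ℤ) = (-1) ^ ((i : ℕ) + j) := by
  simp [pB, Fin.sign_cycleRange, pow_add, Equiv.Perm.decomposeFin.symm_sign]

theorem shA (n N : ℕ) (hN : N = n + 2) (x : Fin N → g) (F : (Fin (n + 1) → g) → g) :
    ∑ σ ∈ Finset.univ.filter (fun σ : Equiv.Perm (Fin N) =>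
        (∀ i j : Fin N, i < j → (j : ℕ) < n + 1 → σ i < σ j) ∧
        (∀ i j : Fin N, i < j → n + 1 ≤ (i : ℕ) → σ i < σ j)),
      (Equiv.Perm.sign σ : ℤ) •
        B (F (fun k : Fin (n + 1) => x (σ (Fin.castLE (by omega) k))))
          (x (σ ⟨n + 1 + 0, by omega⟩)) =
    ∑ i : Fin (n + 2), ((-1 : ℤ) ^ ((i : ℕ) + (n + 1))) •
      B (F (fun k => x (Fin.cast hN.symm (i.succAbove k)))) (x (Fin.cast hN.symm i)) := by
  subst hN
  symm
  have hmono : ∀ i, StrictMono (pA n i ∘ Fin.castSucc) := by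
    intro i
    have : (pA n i ∘ Fin.castSucc) = i.succAbove := by
      funext k; exact pA_castSucc n i k
    rw [this]; exact Fin.strictMono_succAbove i
  apply Finset.sum_bij (fun i _ => pA n i)
  · intro i _
    simp only [Finset.mem_filter, Finset.mem_univ, true_and]
    constructor
    · intro a b hab hb
      exact hmono i (a := ⟨a, by have := Fin.lt_def.1 hab; omega⟩) (b := ⟨b, hb⟩) hab
    · intro a b hab ha
      have := Fin.lt_def.1 hab
      omega
  · intro i _ j _ h
    rw [← pA_last n i, h, pA_last]
  · intro σ hσ
    simp only [Finset.mem_filter, Finset.mem_univ, true_and] at hσ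
    refine ⟨σ (Fin.last _), Finset.mem_univ _, ?_⟩
    apply perm_ext' _ _ Fin.castSucc (hmono _)
    · intro a b hab
      exact hσ.1 _ _ (by simpa using hab) (by simp; omega)
    · intro i hi
      have : i = Fin.last _ := by
        by_contra h
        exact hi ⟨i.castPred h, by simp⟩
      rw [this, pA_last]
  · intro i _
    rw [pA_sign]
    congr 3
    · congr 1
      funext k
      have := pA_castSucc n i k
      exact congrArg x this.symm
    · exact (pA_last n i).symm

theorem shB (n : ℕ) (x : Fin (n + 1 + 1) → g) (F : (Fin (n + 1) → g) → g) :
    diamond n 1 F (fun v => B (v 0) (v 1)) x = S B n F x := by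
  rw [S, ← Finset.sum_product', ← Finset.sum_filter, diamond]
  symm
  have hmono : ∀ i j, StrictMono (pB n i j ∘ fun k : Fin n => k.succ.succ) := by
    intro i j
    have : (pB n i j ∘ fun k : Fin n => k.succ.succ) = i.succAbove ∘ j.succAbove := by
      funext k; exact pB_succ n i j k
    rw [this]; exact (Fin.strictMono_succAbove i).comp (Fin.strictMono_succAbove j)
  apply Finset.sum_bij (fun p _ => pB n p.1 p.2)
  · rintro ⟨i, j⟩ hij
    simp only [Finset.mem_filter, Finset.mem_univ, true_and, Finset.mem_product] at hij ⊢
    constructor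
    · intro a b hab hb
      have := Fin.lt_def.1 hab
      have ha : a = 0 := Fin.ext (show (a : ℕ) = 0 by omega)
      have hb : b = 1 := Fin.ext (by rw [Fin.val_one]; omega)
      rw [ha, hb, pB_zero, pB_one]
      exact Fin.lt_succAbove_iff_le_castSucc _ _ |>.2 hij
    · intro a b hab ha
      have h := Fin.lt_def.1 hab
      have ea : a = (⟨a - 2, by omega⟩ : Fin n).succ.succ := Fin.ext (by simp; omega)
      have eb : b = (⟨b - 2, by omega⟩ : Fin n).succ.succ := Fin.ext (by simp; omega)
      rw [ea, eb]
      exact hmono i j (Fin.lt_def.2 (by simp; omega))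
  · rintro ⟨i, j⟩ _ ⟨i', j'⟩ _ h
    have h0 : i = i' := by rw [← pB_zero n i j, h, pB_zero]
    subst h0
    have h1 : i.succAbove j = i.succAbove j' := by rw [← pB_one n i j, h, pB_one]
    rw [Fin.succAbove_right_injective h1]
  · intro σ hσ
    simp only [Finset.mem_filter, Finset.mem_univ, true_and] at hσ
    have h01 : σ 0 < σ 1 := hσ.1 0 1 (by simp [Fin.lt_def]) (by simp)
    obtain ⟨j, hj⟩ := Fin.exists_succAbove_eq (x := σ 1) (y := σ 0) h01.ne'
    refine ⟨(σ 0, j), ?_, ?_⟩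
    · simp only [Finset.mem_filter, Finset.mem_univ, true_and, Finset.mem_product]
      rw [← hj] at h01
      exact Fin.lt_succAbove_iff_le_castSucc _ _ |>.1 h01
    · apply perm_ext' _ _ (fun k : Fin n => k.succ.succ) (hmono _ _)
      · intro a b hab
        exact hσ.2 _ _ (by simpa using hab) (by simp)
      · intro i
        refine Fin.cases (fun _ => ?_) (fun i => Fin.cases (fun _ => ?_) (fun i hi => ?_) i) i
        · exact pB_zero _ _ _
        · exact (pB_one _ _ _).trans hj
        · exact absurd ⟨i, rfl⟩ hi
  · rintro ⟨i, j⟩ _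
    rw [pB_sign]
    have h0 : x (pB n i j (Fin.castLE (by omega) (0 : Fin (1 + 1)))) = x i :=
      congrArg x (pB_zero n i j)
    have h1 : x (pB n i j (Fin.castLE (by omega) (1 : Fin (1 + 1)))) = x (i.succAbove j) :=
      congrArg x (pB_one n i j)
    have h2 : ∀ k : Fin n, x (pB n i j ⟨1 + 1 + (k : ℕ), by omega⟩)
        = x (i.succAbove (j.succAbove k)) := by
      intro k
      rw [← pB_succ]
      congr 2
      ext; simp; omega
    simp only [h0, h1, h2]

theorem nr_eq (hB : ∀ x y : g, B x y = - B y x) (n : ℕ) (F : (Fin (n + 1) → g) → g)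
    (hF : SK (n + 1) F) (x : Fin (1 + n + 1) → g) :
    nrNR 1 n (fun v => B (v 0) (v 1)) F x
      = ((-1 : ℤ) ^ n) • d B (n + 1) F (fun i => x (Fin.cast (by omega) i)) := by
  rw [nrNR, shB, d_eq B F hF, one_mul, smul_sub]
  congr 1
  refine (shA B n (1 + n + 1) (by omega) x F).trans ?_
  rw [R, Finset.smul_sum]
  apply Finset.sum_congr rfl
  intro i _
  rw [smul_smul, hB, smul_neg, ← neg_smul]
  congr 1
  ring

theorem d_cast {a b : ℕ} (h : a = b) (F : (Fin b → g) → g) (x : Fin (a + 1) → g) :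
    d B a (fun v => F (fun i => v (Fin.cast h.symm i))) x
      = d B b F (fun i => x (Fin.cast (by omega) i)) := by
  subst h; rfl

theorem SK_cast {a b : ℕ} (h : a = b) (F : (Fin b → g) → g) (hF : SK b F) :
    SK a (fun v => F (fun i => v (Fin.cast h.symm i))) := by
  subst h; exact hF

theorem SK_sign (n k : ℕ) (F : (Fin n → g) → g) (hF : SK n F) :
    SK n (fun v => ((-1 : ℤ) ^ k) • F v) := by
  have hz : SK n (F - F) := SK_sub _ _ hF hF
  rcases neg_one_pow_eq_or ℤ k with h | h
  · simpa [h] using hF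
  · have := SK_sub _ _ hz hF
    convert this using 1
    funext v; simp [h]

theorem d_sign (n k : ℕ) (F : (Fin n → g) → g) (x : Fin (n + 1) → g) :
    d B n (fun v => ((-1 : ℤ) ^ k) • F v) x = ((-1 : ℤ) ^ k) • d B n F x := by
  rcases neg_one_pow_eq_or ℤ k with h | h
  · simp [h]
  · have := congrFun (d_neg B F) x
    simp only [h, neg_smul, one_smul]
    exact this

theorem nr_nr (hB : ∀ x y : g, B x y = - B y x) (hB' : ∀ x y : g, B' x y = - B' y x)
    (m : ℕ) (f : AlternatingMap K g g (Fin (m + 1))) (x : Fin (1 + (1 + m) + 1) → g) :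
    nrNR 1 (1 + m) (fun v => B (v 0) (v 1)) (nrNR 1 m (fun v => B' (v 0) (v 1)) ⇑f) x
      = ((-1 : ℤ) ^ (1 + m)) • ((-1 : ℤ) ^ m) •
        d B (m + 2) (d B' (m + 1) f) (fun i => x (Fin.cast (by omega) i)) := by
  have e : nrNR 1 m (fun v => B' (v 0) (v 1)) ⇑f = fun v => ((-1 : ℤ) ^ m) •
      d B' (m + 1) f (fun i => v (Fin.cast (by omega) i)) := by
    funext v
    exact nr_eq B' hB' m f (SK_alt f) v
  have hs := SK_d B' hB' f (MA_alt f) (SK_alt f)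
  have hs' := SK_cast (a := 1 + m + 1) (b := m + 1 + 1) (by omega) _ hs
  rw [e, nr_eq B hB _ _ (SK_sign _ _ _ hs'), d_sign, d_cast B (by omega : 1 + m + 1 = m + 2)]
  rfl

end

end NRaux

/-- for a compatible Lie algebra `(g, μ, μ')`, the operators
`∂_μ = [μ,−]_NR` and `∂_{μ'} = [μ',−]_NR` anticommute on alternating multilinear maps:
`[μ,[μ',f]_NR]_NR + [μ',[μ,f]_NR]_NR = 0`. -/
theorem stmt_6
    (B B' : g →ₗ[K] g →ₗ[K] g)
    (hBskew : ∀ x y : g, B x y = - B y x)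
    (hB'skew : ∀ x y : g, B' x y = - B' y x)
    (hBjac : ∀ x y z : g, B (B x y) z + B (B y z) x + B (B z x) y = 0)
    (hB'jac : ∀ x y z : g, B' (B' x y) z + B' (B' y z) x + B' (B' z x) y = 0)
    (hcompat : ∀ x y z : g, B (B' x y) z + B' (B x y) z
      = B (B' x z) y + B' (B x z) y + B x (B' y z) + B' x (B y z))
    (m : ℕ) (f : AlternatingMap K g g (Fin (m + 1)))
    (x : Fin (1 + (1 + m) + 1) → g) :
    nrNR 1 (1 + m) (fun v => B (v 0) (v 1)) (nrNR 1 m (fun v => B' (v 0) (v 1)) ⇑f) x +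
      nrNR 1 (1 + m) (fun v => B' (v 0) (v 1)) (nrNR 1 m (fun v => B (v 0) (v 1)) ⇑f) x
      = 0 := by
  rw [NRaux.nr_nr B B' hBskew hB'skew, NRaux.nr_nr B' B hB'skew hBskew, ← smul_add, ← smul_add]
  have h := NRaux.dd B B' hBskew hB'skew hcompat f (NRaux.MA_alt f)
  have h' := congrFun h (fun i => x (Fin.cast (by omega) i))
  simp only [Pi.add_apply, Pi.zero_apply] at h'
  rw [h', smul_zero, smul_zero]
end

section
/- Let L₋₁, L₀ be vector spaces over a field of characteristic 0, let l: L₋₁ → L₀ be a linear map, and suppose (L₋₁ ⊕ L₀, l, l₂, l₃) and (L₋₁ ⊕ L₀, l, l₂', l₃') are 2-term L∞-algebras with the same differential l. Then the compatibility conditions (C1)–(C5) hold (for all w,x,y,z ∈ L₀ and h,k ∈ L₋₁): (C1) l(l₂'(x,h)) + l(l₂(x,h)) = l₂(x,l(h)) + l₂'(x,l(h)); (C2) l₂(l(h),k) + l₂'(l(h),k) = l₂(h,l(k)) + l₂'(h,l(k)); (C3) l(l₃'(x,y,z)) + l(l₃(x,y,z)) = −l₂(l₂'(x,y),z) − l₂'(l₂(x,y),z)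 + l₂(l₂'(x,z),y) + l₂'(l₂(x,z),y) + l₂(x,l₂'(y,z)) + l₂'(x,l₂(y,z)); (C4) l₃(l(h),x,y) + l₃'(l(h),x,y) = −l₂(l₂'(x,y),h) − l₂'(l₂(x,y),h) + l₂(l₂'(x,h),y) + l₂'(l₂(x,h),y) + l₂(x,l₂'(y,h)) + l₂'(x,l₂(y,h)); (C5) l₂(l₃'(w,x,y),z) + l₂'(l₃(w,x,y),z) + l₂(l₃'(w,y,z),x) + l₂'(l₃(w,y,z),x) − l₂(l₃'(w,x,z),y) − l₂'(l₃(w,x,z),y) − l₂(l₃'(x,y,z),w) − l₂'(l₃(x,y,z),w) = l₃(l₂'(w,x),y,z) + l₃'(l₂(w,x),y,z) − l₃(l₂'(w,y),x,z) − l₃'(l₂(w,y),x,z) + l₃(l₂'(w,z),x,y) + l₃'(l₂(w,z),x,y) + l₃(l₂'(x,y),w,z) + l₃'(l₂(x,y),w,z) − l₃(l₂'(x,z),w,y) − l₃'(l₂(x,z),w,y) + l₃(l₂'(y,z),w,x) + l₃'(l₂(y,z),w,x) — if and only if (L₋₁ ⊕ L₀, l, l₂ + l₂', 2(l₃ + l₃'))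 is a 2-term L∞-algebra. -/
variable {K : Type*} [Field K] [CharZero K]
variable {A M : Type*} [AddCommGroup A] [Module K A] [AddCommGroup M] [Module K M]

/-- A 2-term L∞-algebra structure on `L₋₁ ⊕ L₀` with `L₋₁ = A`, `L₀ = M`:
`d = l₁ : A → M`, `b = l₂ : M × M → M` (skew-symmetric), `a = l₂ : M × A → A` (with the
convention `l₂(h,x) = −l₂(x,h) = −a x h`), and `t = l₃ : M³ → A` (alternating), subject to
the axioms (L1)–(L5). -/
structure IsL2 (d : A →ₗ[K] M) (b : M →ₗ[K] M →ₗ[K] M)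
    (a : M →ₗ[K] A →ₗ[K] A) (t : M →ₗ[K] M →ₗ[K] M →ₗ[K] A) : Prop where
  b_skew : ∀ x y : M, b x y = - b y x
  t_skew12 : ∀ x y z : M, t x y z = - t y x z
  t_skew23 : ∀ x y z : M, t x y z = - t x z y
  L1 : ∀ (x : M) (h : A), d (a x h) = b x (d h)
  L2 : ∀ h k : A, a (d h) k = - a (d k) h
  L3 : ∀ x y z : M, d (t x y z) = - b (b x y) z + b (b x z) y + b x (b y z)
  L4 : ∀ (h : A) (x y : M),
    t (d h) x y = - a (b x y) h - a y (a x h) + a x (a y h)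
  L5 : ∀ w x y z : M,
    - a z (t w x y) - a x (t w y z) + a y (t w x z) + a w (t x y z)
      = t (b w x) y z - t (b w y) x z + t (b w z) x y
        + t (b x y) w z - t (b x z) w y + t (b y z) w x

/-- The compatibility conditions (C1)–(C5) between two 2-term L∞-algebra structures
`(d,b,a,t)` and `(d',b',a',t')` on `L₋₁ ⊕ L₀` (with the convention
`l₂(h,x) = −a x h`, `l₂'(h,x) = −a' x h`). -/
structure IsCompat2 (d d' : A →ₗ[K] M) (b b' : M →ₗ[K] M →ₗ[K] M)
    (a a' : M →ₗ[K] A →ₗ[K] A) (t t' : M →ₗ[K] M →ₗ[K] M →ₗ[K] A) : Prop where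
  C1 : ∀ (x : M) (h : A), d (a' x h) + d' (a x h) = b x (d' h) + b' x (d h)
  C2 : ∀ h k : A, a (d' h) k + a' (d h) k = - a (d' k) h - a' (d k) h
  C3 : ∀ x y z : M, d (t' x y z) + d' (t x y z)
    = - b (b' x y) z - b' (b x y) z + b (b' x z) y + b' (b x z) y
      + b x (b' y z) + b' x (b y z)
  C4 : ∀ (h : A) (x y : M),
    t (d' h) x y + t' (d h) x y
      = - a (b' x y) h - a' (b x y) h - a y (a' x h) - a' y (a x h)
        + a x (a' y h) + a' x (a y h)
  C5 : ∀ w x y z : M,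
    - a z (t' w x y) - a' z (t w x y) - a x (t' w y z) - a' x (t w y z)
      + a y (t' w x z) + a' y (t w x z) + a w (t' x y z) + a' w (t x y z)
      = t (b' w x) y z + t' (b w x) y z - t (b' w y) x z - t' (b w y) x z
        + t (b' w z) x y + t' (b w z) x y + t (b' x y) w z + t' (b x y) w z
        - t (b' x z) w y - t' (b x z) w y + t (b' y z) w x + t' (b y z) w x

/-- for two 2-term L∞-algebras with the same differential `d`, the
compatibility conditions (C1)–(C5) hold iff `(A ⊕ M, d, b + b', 2(t + t'))` is a 2-term
L∞-algebra. -/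
theorem stmt_11 (d : A →ₗ[K] M) (b b' : M →ₗ[K] M →ₗ[K] M)
    (a a' : M →ₗ[K] A →ₗ[K] A) (t t' : M →ₗ[K] M →ₗ[K] M →ₗ[K] A)
    (hL : IsL2 d b a t) (hL' : IsL2 d b' a' t') :
    IsCompat2 d d b b' a a' t t' ↔ IsL2 d (b + b') (a + a') (2 • (t + t')) := by
  have e : ∀ x y z : M, (2 • (t + t')) x y z = t x y z + t' x y z + (t x y z + t' x y z) := by
    intro x y z
    simp only [two_smul, LinearMap.add_apply]
  constructor
  · intro hC
    refine ⟨?_, ?_, ?_, ?_, ?_, ?_, ?_, ?_⟩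
    · intro x y
      simp only [LinearMap.add_apply]
      linear_combination (norm := module) hL.b_skew x y + hL'.b_skew x y
    · intro x y z
      simp only [e]
      linear_combination (norm := module) (2 : K) • hL.t_skew12 x y z + (2 : K) • hL'.t_skew12 x y z
    · intro x y z
      simp only [e]
      linear_combination (norm := module) (2 : K) • hL.t_skew23 x y z + (2 : K) • hL'.t_skew23 x y z
    · intro x h
      simp only [LinearMap.add_apply, map_add]
      linear_combination (norm := module) hL.L1 x h + hL'.L1 x h
    · intro h k
      simp only [LinearMap.add_apply, map_add]
      linear_combination (norm := module) hL.L2 h k + hL'.L2 h k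
    · intro x y z
      simp only [e, LinearMap.add_apply, map_add]
      linear_combination (norm := module) hL.L3 x y z + hL'.L3 x y z + hC.C3 x y z
    · intro h x y
      simp only [e, LinearMap.add_apply, map_add]
      linear_combination (norm := module) hL.L4 h x y + hL'.L4 h x y + hC.C4 h x y
    · intro w x y z
      simp only [e, LinearMap.add_apply, map_add]
      linear_combination (norm := module) (2 : K) • hL.L5 w x y z + (2 : K) • hL'.L5 w x y z
        + (2 : K) • hC.C5 w x y z
  · intro hS
    refine ⟨?_, ?_, ?_, ?_, ?_⟩
    · intro x h
      linear_combination (norm := module) hL.L1 x h + hL'.L1 x h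
    · intro h k
      linear_combination (norm := module) hL.L2 h k + hL'.L2 h k
    · intro x y z
      have H := hS.L3 x y z
      simp only [e, LinearMap.add_apply, map_add] at H
      linear_combination (norm := module) H - hL.L3 x y z - hL'.L3 x y z
    · intro h x y
      have H := hS.L4 h x y
      simp only [e, LinearMap.add_apply, map_add] at H
      linear_combination (norm := module) H - hL.L4 h x y - hL'.L4 h x y
    · intro w x y z
      have H := hS.L5 w x y z
      simp only [e, LinearMap.add_apply, map_add] at H
      have H1 := hL.L5 w x y z
      have H2 := hL'.L5 w x y z
      have h2 : (2 : K) ≠ 0 := two_ne_zero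
      refine smul_right_injective A h2 ?_
      simp only [two_smul]
      rw [← sub_eq_zero] at H H1 H2 ⊢
      have H3 := congrArg₂ (· - ·) H (congrArg₂ (· + ·) (congrArg₂ (· + ·) H1 H1)
        (congrArg₂ (· + ·) H2 H2))
      simp only [add_zero, sub_zero] at H3
      rw [← H3]
      abel
end
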